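/- Assume p ≠ 1 and q ≠ 1, and let B = A_p(1, 1, K_q[s,t]). Then every K-algebra automorphism φ of the polynomial extension B[w] is triangular: there exist a K-algebra automorphism φ_0 of B, a ∈ K^× and b in the center of B such that φ(u) = φ_0(u) for all u ∈ B and φ(w) = a·w + b. Moreover, if K has characteristic zero, then every locally nilpotent K-linear derivation of B is zero. -/

import Mathlib

/-!
Put `z = xy - yx = 1 + (p - 1) yx`, so that `zy = p yz`, `xz = p zx`, and `z` commutes with `s, t`.
Inverting `y` turns `x` into `(p - 1)⁻¹ Y⁻¹ (Z - 1)`, which embeds `B` into the algebra with basis the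
monomials `T^d S^c Y^b Z^a` (`b ∈ ℤ`, `a, c, d ∈ ℕ`), multiplied up to scalars by adding exponents.
The embedding is `ev`; its injectivity (`ev_injective`) comes from the spanning set
`y^n z^a t^d s^c`, `x^n z^a t^d s^c`, whose images are triangular. Leading terms for a lexicographic
order and for its reverse show that `B` is a domain, that factors of a monomial are monomials
(`factor_mono`), and that an element conjugate to a monomial is a scalar multiple of it
(`conj_mono`). Monomials lying in `B` have `b ≥ 0` (`monomial_nonneg`), so `z, s, t` are irreducible
in `B[w]` (`irreducible_C`).

Let `n` be a normal element of `B[w]`. Comparing degrees in `w`, each coefficient of `n` commutes with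
`y, z, s, t` up to scalars independent of the coefficient. The scalar of `z` is `1` because `yx` is a
combination of `z` and `1`. If another scalar is not `1`, it restricts the exponents occurring in `n`
and makes `n` divisible by `z`, `s` or `t`; otherwise `n` is central. This is `normal_dvd`.

An automorphism `φ` of `B[w]` maps the non-central normal irreducible elements `z, s, t` to elements
of the same kind, hence to unit multiples of `z, s, t`, which have degree `0` in `w`. As
`φ(z) = 1 + (p - 1) φ(y) φ(x)`, also `φ(x)` and `φ(y)` have degree `0`, so `φ(B) ⊆ B`; the same holds
for `φ⁻¹`, and `φ` restricts to an automorphism of `B`. A degree count for `φ(φ⁻¹(w)) = w` gives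
`φ(w) = αw + β` with `α` a unit of `B`, that is, a nonzero scalar; `β` is central since `w` is.

A locally nilpotent derivation `δ` in characteristic zero gives the automorphism `exp(wδ)` of `B[w]`.
By triangularity the coefficient `δ(b)` of `w` in `exp(wδ)(b)` vanishes for all `b ∈ B`.
-/

noncomputable section

open FreeAlgebra

/-- Relations of the algebra `A_p(lam, mu, K_q[s,t])`; for `lam = mu = 1` this is
`A_p(1, 1, K_q[s,t])`: `xy - p·yx = 1`, `st = q·ts`, `s,t` commute with `x,y`. -/
inductive ExtWeylRel (K : Type*) [Field K] (p q lam mu : K) :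
    FreeAlgebra K (Fin 4) → FreeAlgebra K (Fin 4) → Prop
  | weyl : ExtWeylRel K p q lam mu (ι K (0 : Fin 4) * ι K 1 - p • (ι K 1 * ι K 0)) 1
  | st : ExtWeylRel K p q lam mu (ι K (2 : Fin 4) * ι K 3) (q • (ι K 3 * ι K 2))
  | sx : ExtWeylRel K p q lam mu (ι K (2 : Fin 4) * ι K 0) (lam • (ι K 0 * ι K 2))
  | sy : ExtWeylRel K p q lam mu (ι K (2 : Fin 4) * ι K 1) (lam⁻¹ • (ι K 1 * ι K 2))
  | tx : ExtWeylRel K p q lam mu (ι K (3 : Fin 4) * ι K 0) (mu • (ι K 0 * ι K 3))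
  | ty : ExtWeylRel K p q lam mu (ι K (3 : Fin 4) * ι K 1) (mu⁻¹ • (ι K 1 * ι K 3))

/-- The algebra `A_p(lam, mu, K_q[s,t])`. -/
abbrev ExtWeyl (K : Type*) [Field K] (p q lam mu : K) : Type _ :=
  RingQuot (ExtWeylRel K p q lam mu)

variable (K : Type*) [Field K] (p q : K)

/-- The generator `x` of `A = A_p(1, 1, K_q[s,t])`. -/
def wx : ExtWeyl K p q 1 1 := RingQuot.mkAlgHom K _ (ι K 0)
/-- The generator `y`. -/
def wy : ExtWeyl K p q 1 1 := RingQuot.mkAlgHom K _ (ι K 1)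
/-- The generator `s`. -/
def ws : ExtWeyl K p q 1 1 := RingQuot.mkAlgHom K _ (ι K 2)
/-- The generator `t`. -/
def wt : ExtWeyl K p q 1 1 := RingQuot.mkAlgHom K _ (ι K 3)
/-- The element `z = xy - yx`. -/
def wz : ExtWeyl K p q 1 1 := wx K p q * wy K p q - wy K p q * wx K p q

namespace ExtWeylAux

section

/-! ### Relations -/

variable {K p q}

/-- Exponent vectors `(a, b, c, d)` of the monomials `T^d S^c Y^b Z^a`. -/
abbrev Ix : Type := ℕ × ℤ × ℕ × ℕ

local notation "B" => ExtWeyl K p q 1 1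

lemma rel_xy : wx K p q * wy K p q - p • (wy K p q * wx K p q) = 1 := by
  have h := RingQuot.mkAlgHom_rel K (ExtWeylRel.weyl (K := K) (p := p) (q := q) (lam := 1) (mu := 1))
  simpa [wx, wy] using h

lemma rel_st : ws K p q * wt K p q = q • (wt K p q * ws K p q) := by
  have h := RingQuot.mkAlgHom_rel K (ExtWeylRel.st (K := K) (p := p) (q := q) (lam := 1) (mu := 1))
  simpa [ws, wt] using h

lemma rel_sx : ws K p q * wx K p q = wx K p q * ws K p q := by
  have h := RingQuot.mkAlgHom_rel K (ExtWeylRel.sx (K := K) (p := p) (q := q) (lam := 1) (mu := 1))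
  simpa [ws, wx] using h

lemma rel_sy : ws K p q * wy K p q = wy K p q * ws K p q := by
  have h := RingQuot.mkAlgHom_rel K (ExtWeylRel.sy (K := K) (p := p) (q := q) (lam := 1) (mu := 1))
  simpa [ws, wy] using h

lemma rel_tx : wt K p q * wx K p q = wx K p q * wt K p q := by
  have h := RingQuot.mkAlgHom_rel K (ExtWeylRel.tx (K := K) (p := p) (q := q) (lam := 1) (mu := 1))
  simpa [wt, wx] using h

lemma rel_ty : wt K p q * wy K p q = wy K p q * wt K p q := by
  have h := RingQuot.mkAlgHom_rel K (ExtWeylRel.ty (K := K) (p := p) (q := q) (lam := 1) (mu := 1))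
  simpa [wt, wy] using h

lemma xy_eq : wx K p q * wy K p q = 1 + p • (wy K p q * wx K p q) := by
  rw [← rel_xy (K := K) (p := p) (q := q)]; abel

lemma z_eq : wz K p q = 1 + (p - 1) • (wy K p q * wx K p q) := by
  rw [wz, xy_eq]; module

lemma x_mul_z : wx K p q * wz K p q = p • (wz K p q * wx K p q) := by
  have h : wx K p q * (wy K p q * wx K p q) = wx K p q + p • (wy K p q * wx K p q * wx K p q) := by
    rw [← mul_assoc, xy_eq, add_mul, one_mul, smul_mul_assoc]
  rw [z_eq, mul_add, mul_one, mul_smul_comm, h, add_mul, one_mul, smul_mul_assoc]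
  module

lemma z_mul_y : wz K p q * wy K p q = p • (wy K p q * wz K p q) := by
  have h : wy K p q * wx K p q * wy K p q = wy K p q + p • (wy K p q * (wy K p q * wx K p q)) := by
    rw [mul_assoc, xy_eq, mul_add, mul_one, mul_smul_comm]
  rw [z_eq, add_mul, one_mul, smul_mul_assoc, h, mul_add, mul_one, mul_smul_comm]
  module

lemma s_mul_z : ws K p q * wz K p q = wz K p q * ws K p q := by
  simp only [wz, mul_sub, sub_mul]
  rw [← mul_assoc, rel_sx, mul_assoc, rel_sy, ← mul_assoc, ← mul_assoc, rel_sy, mul_assoc (wy K p q),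
    rel_sx, ← mul_assoc]

lemma t_mul_z : wt K p q * wz K p q = wz K p q * wt K p q := by
  simp only [wz, mul_sub, sub_mul]
  rw [← mul_assoc, rel_tx, mul_assoc, rel_ty, ← mul_assoc, ← mul_assoc, rel_ty, mul_assoc (wy K p q),
    rel_tx, ← mul_assoc]

lemma yx_eq (hp1 : p ≠ 1) :
    wy K p q * wx K p q = (p - 1)⁻¹ • (wz K p q - 1) := by
  rw [z_eq, add_sub_cancel_left, smul_smul, inv_mul_cancel₀ (sub_ne_zero.2 hp1), one_smul]

lemma xy_eq' (hp1 : p ≠ 1) :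
    wx K p q * wy K p q = (p - 1)⁻¹ • (p • wz K p q - 1) := by
  have h : p - 1 ≠ 0 := sub_ne_zero.2 hp1
  have h1 : (1 : B) = (p - 1)⁻¹ • ((p - 1) • (1 : B)) := by
    rw [smul_smul, inv_mul_cancel₀ h, one_smul]
  rw [xy_eq, yx_eq hp1]
  calc 1 + p • (p - 1)⁻¹ • (wz K p q - 1)
      = (p - 1)⁻¹ • ((p - 1) • (1 : B)) + p • (p - 1)⁻¹ • (wz K p q - 1) := by rw [← h1]
    _ = _ := by module

/-- Induction over the generators of `B`. -/
lemma gen_induction {P : B → Prop} (hx : P (wx K p q)) (hy : P (wy K p q)) (hs : P (ws K p q))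
    (ht : P (wt K p q)) (hc : ∀ c : K, P (algebraMap K B c))
    (hadd : ∀ a b, P a → P b → P (a + b)) (hmul : ∀ a b, P a → P b → P (a * b)) (b : B) : P b := by
  obtain ⟨f, rfl⟩ := RingQuot.mkAlgHom_surjective K (ExtWeylRel K p q 1 1) b
  induction f using FreeAlgebra.induction with
  | grade0 r => simpa using hc r
  | grade1 i =>
    fin_cases i
    · exact hx
    · exact hy
    · exact hs
    · exact ht
  | mul a b ha hb => rw [map_mul]; exact hmul _ _ ha hb
  | add a b ha hb => rw [map_add]; exact hadd _ _ ha hb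

/-! ### The representation on the quantum torus -/

open Finsupp

/-- The cocycle `χ(g, h)` with `M_g M_h = χ(g, h) M_{g+h}` for `M_{(a,b,c,d)} = T^d S^c Y^b Z^a`,
where `ZY = pYZ`, `ST = qTS` and all other pairs commute. -/
def chi (p q : K) (g h : Ix) : K := p ^ ((g.1 : ℤ) * h.2.1) * q ^ (g.2.2.1 * h.2.2.2)

/-- Left multiplication by `X = (p - 1)⁻¹ Y⁻¹ (Z - 1)` on the monomials. -/
def opX (p : K) : (Ix →₀ K) →ₗ[K] (Ix →₀ K) :=
  linearCombination K fun g : Ix =>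
    (p - 1)⁻¹ • (single ((g.1 + 1, g.2.1 - 1, g.2.2) : Ix) (p ^ g.2.1)
      - single ((g.1, g.2.1 - 1, g.2.2) : Ix) 1)

/-- Left multiplication by `Y` on the monomials. -/
def opY (K : Type*) [Field K] : (Ix →₀ K) →ₗ[K] (Ix →₀ K) :=
  linearCombination K fun g : Ix => single ((g.1, g.2.1 + 1, g.2.2) : Ix) 1

/-- Left multiplication by `S` on the monomials. -/
def opS (q : K) : (Ix →₀ K) →ₗ[K] (Ix →₀ K) :=
  linearCombination K fun g : Ix => single ((g.1, g.2.1, g.2.2.1 + 1, g.2.2.2) : Ix) (q ^ g.2.2.2)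

/-- Left multiplication by `T` on the monomials. -/
def opT (K : Type*) [Field K] : (Ix →₀ K) →ₗ[K] (Ix →₀ K) :=
  linearCombination K fun g : Ix => single ((g.1, g.2.1, g.2.2.1, g.2.2.2 + 1) : Ix) 1

/-- Right multiplication by the monomial `M_h`. -/
def rho (p q : K) (h : Ix) : (Ix →₀ K) →ₗ[K] (Ix →₀ K) :=
  linearCombination K fun g : Ix => single (g + h) (chi p q g h)

lemma opX_single (a : ℕ) (b : ℤ) (c d : ℕ) :
    opX p (single ((a, b, c, d) : Ix) (1 : K)) =
      (p - 1)⁻¹ • (p ^ b • single ((a + 1, b - 1, c, d) : Ix) 1 - single ((a, b - 1, c, d) : Ix) 1) := by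
  simp [opX]

lemma opY_single (a : ℕ) (b : ℤ) (c d : ℕ) :
    opY K (single ((a, b, c, d) : Ix) (1 : K)) = single ((a, b + 1, c, d) : Ix) 1 := by
  simp [opY]

lemma opS_single (a : ℕ) (b : ℤ) (c d : ℕ) :
    opS q (single ((a, b, c, d) : Ix) (1 : K)) = q ^ d • single ((a, b, c + 1, d) : Ix) 1 := by
  simp [opS]

lemma opT_single (a : ℕ) (b : ℤ) (c d : ℕ) :
    opT K (single ((a, b, c, d) : Ix) (1 : K)) = single ((a, b, c, d + 1) : Ix) 1 := by
  simp [opT]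

lemma rho_single (g h : Ix) :
    rho p q h (single g (1 : K)) = chi p q g h • single (g + h) 1 := by
  simp [rho]

/-- Linear endomorphisms agree if they agree on monomials. -/
lemma end_ext {f g : (Ix →₀ K) →ₗ[K] (Ix →₀ K)}
    (h : ∀ (a : ℕ) (b : ℤ) (c d : ℕ), f (single (a, b, c, d) 1) = g (single (a, b, c, d) 1)) :
    f = g := by
  refine Finsupp.lhom_ext' fun ⟨a, b, c, d⟩ => LinearMap.ext_ring ?_
  simpa using h a b c d

lemma single_eq (g : Ix) (r : K) : single g r = r • single g (1 : K) := by simp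

/-- The images of the generators `x, y, s, t`. -/
def opGen (p q : K) : Fin 4 → Module.End K (Ix →₀ K) := ![opX p, opY K, opS q, opT K]

/-- The representation of `B` by left multiplication on the quantum torus. -/
def rep (hp : p ≠ 0) (hp1 : p ≠ 1) : B →ₐ[K] Module.End K (Ix →₀ K) :=
  RingQuot.liftAlgHom K ⟨FreeAlgebra.lift K (opGen p q), by
    have h1 : p - 1 ≠ 0 := sub_ne_zero.2 hp1
    intro u v huv
    cases huv <;>
    simp only [map_mul, map_sub, map_smul, map_one, FreeAlgebra.lift_ι_apply, opGen,
      Matrix.cons_val, inv_one, one_smul] <;>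
    refine end_ext fun a b c d => ?_ <;>
    simp only [Module.End.mul_apply, LinearMap.sub_apply, LinearMap.smul_apply, opX_single,
      opY_single, opS_single, opT_single, map_smul,
      map_sub, Module.End.one_apply, add_sub_cancel_right, sub_add_cancel]
    · rw [zpow_add_one₀ hp]
      have : single ((a, b, c, d) : Ix) (1 : K)
          = (p - 1)⁻¹ • (p - 1) • single ((a, b, c, d) : Ix) (1 : K) := by
        rw [smul_smul, inv_mul_cancel₀ h1, one_smul]
      refine Eq.trans ?_ this.symm
      module
    · module
    · module⟩

variable (hp : p ≠ 0) (hp1 : p ≠ 1)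

lemma rep_x : rep hp hp1 (wx K p q) = opX p := by
  simp [rep, wx, RingQuot.liftAlgHom_mkAlgHom_apply, opGen]
lemma rep_y : rep hp hp1 (wy K p q) = opY K := by
  simp [rep, wy, RingQuot.liftAlgHom_mkAlgHom_apply, opGen]
lemma rep_s : rep hp hp1 (ws K p q) = opS q := by
  simp [rep, ws, RingQuot.liftAlgHom_mkAlgHom_apply, opGen]
lemma rep_t : rep hp hp1 (wt K p q) = opT K := by
  simp [rep, wt, RingQuot.liftAlgHom_mkAlgHom_apply, opGen]

lemma rep_z_single (a : ℕ) (b : ℤ) (c d : ℕ) :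
    rep hp hp1 (wz K p q) (single ((a, b, c, d) : Ix) (1 : K)) =
      p ^ b • single ((a + 1, b, c, d) : Ix) 1 := by
  have h1 : p - 1 ≠ 0 := sub_ne_zero.2 hp1
  rw [z_eq]
  simp only [map_add, map_one, map_smul, map_mul, rep_x, rep_y, LinearMap.add_apply,
    Module.End.one_apply, LinearMap.smul_apply, Module.End.mul_apply, opX_single, map_sub,
    opY_single, sub_add_cancel, smul_smul, mul_inv_cancel₀ h1, one_smul]
  abel

/-- The element of the quantum torus given by `b : B`, as its vector of coefficients. -/
def ev (b : B) : Ix →₀ K := rep hp hp1 b (single 0 1)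

lemma chi_zero_left (h : Ix) : chi p q 0 h = 1 := by simp [chi]

include hp in
lemma chi_ne_zero (hq : q ≠ 0) (g h : Ix) : chi p q g h ≠ 0 :=
  mul_ne_zero (zpow_ne_zero _ hp) (pow_ne_zero _ hq)

/-- Left multiplications commute with right multiplications. -/
lemma rep_rho (h : Ix) (b : B) : rep hp hp1 b * rho p q h = rho p q h * rep hp hp1 b := by
  induction b using gen_induction with
  | hx =>
    obtain ⟨a', b', c', d'⟩ := h
    rw [rep_x]
    refine end_ext fun a b c d => ?_
    simp only [Module.End.mul_apply, rho_single, map_smul, opX_single,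
      map_sub, Prod.mk_add_mk]
    have e1 : (a + 1 + a', b - 1 + b', c + c', d + d') = ((a + a' + 1, b + b' - 1, c + c', d + d') : Ix) := by
      congr 1
      · ring
      · congr 1; ring
    have e2 : b - 1 + b' = b + b' - 1 := by ring
    rw [e1, e2]
    simp only [chi]
    push_cast
    rw [add_mul, one_mul, zpow_add₀ hp, zpow_add₀ hp]
    module
  | hy =>
    obtain ⟨a', b', c', d'⟩ := h
    rw [rep_y]
    refine end_ext fun a b c d => ?_
    simp only [Module.End.mul_apply, rho_single, map_smul, opY_single,
      Prod.mk_add_mk]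
    rw [add_right_comm]
    simp [chi]
  | hs =>
    obtain ⟨a', b', c', d'⟩ := h
    rw [rep_s]
    refine end_ext fun a b c d => ?_
    simp only [Module.End.mul_apply, rho_single, map_smul, opS_single,
      Prod.mk_add_mk]
    rw [add_right_comm c]
    simp only [chi]
    rw [pow_add, add_mul, pow_add, one_mul]
    module
  | ht =>
    obtain ⟨a', b', c', d'⟩ := h
    rw [rep_t]
    refine end_ext fun a b c d => ?_
    simp only [Module.End.mul_apply, rho_single, map_smul, opT_single,
      Prod.mk_add_mk]
    rw [add_right_comm d]
    simp [chi]
  | hc c => rw [AlgHom.commutes]; exact Algebra.commutes _ _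
  | hadd a b ha hb => rw [map_add, add_mul, mul_add, ha, hb]
  | hmul a b ha hb => rw [map_mul, mul_assoc, hb, ← mul_assoc, ha, mul_assoc]

lemma rep_single (b : B) (h : Ix) : rep hp hp1 b (single h 1) = rho p q h (ev hp hp1 b) := by
  have := LinearMap.congr_fun (rep_rho hp hp1 h b) (single 0 1)
  simpa [rho_single, chi_zero_left, ev] using this

lemma ev_mul (a b : B) :
    ev hp hp1 (a * b) = (ev hp hp1 b).sum fun h r => r • rho p q h (ev hp hp1 a) := by
  rw [ev, map_mul, Module.End.mul_apply, ← ev]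
  conv_lhs => rw [← Finsupp.sum_single (ev hp hp1 b), map_finsuppSum]
  refine Finsupp.sum_congr fun h _ => ?_
  rw [single_eq, map_smul, rep_single]

/-- `ev` as a linear map. -/
def evL : B →ₗ[K] (Ix →₀ K) := (LinearMap.applyₗ (single (0 : Ix) (1 : K))).comp (rep hp hp1).toLinearMap

lemma evL_apply (b : B) : evL hp hp1 b = ev hp hp1 b := rfl

lemma rho_apply_add (f : Ix →₀ K) (g h : Ix) : rho p q h f (g + h) = f g * chi p q g h := by
  classical
  rw [rho, linearCombination_apply, Finsupp.sum, Finsupp.finsetSum_apply]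
  simp only [Finsupp.smul_apply, single_apply, add_left_inj, smul_eq_mul, mul_ite, mul_zero]
  rw [Finset.sum_ite_eq' f.support g]
  simp +contextual

lemma rho_apply_ne_zero {f : Ix →₀ K} {g h : Ix} (H : rho p q h f g ≠ 0) :
    ∃ k, g = k + h ∧ f k ≠ 0 := by
  classical
  rw [rho, linearCombination_apply, Finsupp.sum, Finsupp.finsetSum_apply] at H
  obtain ⟨k, hk, hne⟩ := Finset.exists_ne_zero_of_sum_ne_zero H
  refine ⟨k, ?_, by simpa using hk⟩
  by_contra hne'
  exact hne (by simp [Ne.symm hne'])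

/-! ### A spanning set, and injectivity of `ev` -/

lemma z_mul_y_pow (n : ℕ) : wz K p q * wy K p q ^ n = p ^ n • (wy K p q ^ n * wz K p q) := by
  induction n with
  | zero => simp
  | succ n ih =>
    rw [pow_succ, ← mul_assoc, ih, smul_mul_assoc, mul_assoc, z_mul_y, mul_smul_comm, smul_smul,
      ← mul_assoc, pow_succ]

include hp in
lemma z_mul_x : wz K p q * wx K p q = p⁻¹ • (wx K p q * wz K p q) := by
  rw [x_mul_z, smul_smul, inv_mul_cancel₀ hp, one_smul]

include hp in
lemma z_mul_x_pow (n : ℕ) : wz K p q * wx K p q ^ n = p⁻¹ ^ n • (wx K p q ^ n * wz K p q) := by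
  induction n with
  | zero => simp
  | succ n ih =>
    rw [pow_succ, ← mul_assoc, ih, smul_mul_assoc, mul_assoc, z_mul_x hp, mul_smul_comm, smul_smul,
      ← mul_assoc, pow_succ]

lemma s_mul_t_pow (n : ℕ) : ws K p q * wt K p q ^ n = q ^ n • (wt K p q ^ n * ws K p q) := by
  induction n with
  | zero => simp
  | succ n ih =>
    rw [pow_succ, ← mul_assoc, ih, smul_mul_assoc, mul_assoc, rel_st, mul_smul_comm, smul_smul,
      ← mul_assoc, pow_succ]

variable (K p q) in
/-- The factor `z^a t^d s^c` of the monomials below. -/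
def tail (a c d : ℕ) : B := wz K p q ^ a * (wt K p q ^ d * ws K p q ^ c)

variable (K p q) in
/-- The monomial `e_b z^a t^d s^c` of `B`, with `e_b = y^b` for `b ≥ 0` and `e_b = x^{-b}` for
`b ≤ 0`. -/
def mon (g : Ix) : B :=
  wx K p q ^ (-g.2.1).toNat * (wy K p q ^ g.2.1.toNat * tail K p q g.1 g.2.2.1 g.2.2.2)

lemma mon_pos (a n c d : ℕ) : mon K p q (a, (n : ℤ), c, d) = wy K p q ^ n * tail K p q a c d := by
  simp [mon]

lemma mon_neg (a n c d : ℕ) : mon K p q (a, -(n : ℤ), c, d) = wx K p q ^ n * tail K p q a c d := by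
  simp [mon]

lemma z_mul_tail (a c d : ℕ) : wz K p q * tail K p q a c d = tail K p q (a + 1) c d := by
  rw [tail, tail, pow_succ', mul_assoc]

lemma comm_sx : Commute (ws K p q) (wx K p q) := rel_sx
lemma comm_sy : Commute (ws K p q) (wy K p q) := rel_sy
lemma comm_tx : Commute (wt K p q) (wx K p q) := rel_tx
lemma comm_ty : Commute (wt K p q) (wy K p q) := rel_ty
lemma comm_sz : Commute (ws K p q) (wz K p q) := s_mul_z
lemma comm_tz : Commute (wt K p q) (wz K p q) := t_mul_z

lemma s_mul_mon (a : ℕ) (b : ℤ) (c d : ℕ) :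
    ws K p q * mon K p q (a, b, c, d) = q ^ d • mon K p q (a, b, c + 1, d) := by
  simp only [mon, tail]
  rw [(comm_sx.pow_right _).left_comm, (comm_sy.pow_right _).left_comm,
    (comm_sz.pow_right _).left_comm, ← mul_assoc (ws K p q), s_mul_t_pow]
  simp only [smul_mul_assoc, mul_smul_comm, pow_succ', mul_assoc]

lemma t_mul_mon (a : ℕ) (b : ℤ) (c d : ℕ) :
    wt K p q * mon K p q (a, b, c, d) = mon K p q (a, b, c, d + 1) := by
  simp only [mon, tail]
  rw [(comm_tx.pow_right _).left_comm, (comm_ty.pow_right _).left_comm,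
    (comm_tz.pow_right _).left_comm, ← mul_assoc (wt K p q), pow_succ']

lemma mon_mul_s (a : ℕ) (b : ℤ) (c d : ℕ) :
    mon K p q (a, b, c, d) * ws K p q = mon K p q (a, b, c + 1, d) := by
  simp only [mon, tail, mul_assoc, pow_succ]

lemma mon_mul_z (a : ℕ) (b : ℤ) (c d : ℕ) :
    mon K p q (a, b, c, d) * wz K p q = mon K p q (a + 1, b, c, d) := by
  simp only [mon, tail, mul_assoc, pow_succ]
  rw [(comm_sz.pow_left _).eq, ((comm_tz.pow_left _).left_comm)]

include hp1 in
lemma x_mul_mon_mem (g : Ix) :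
    wx K p q * mon K p q g ∈ Submodule.span K (Set.range (mon K p q)) := by
  obtain ⟨a, b, c, d⟩ := g
  obtain ⟨n, rfl | rfl⟩ := b.eq_nat_or_neg
  · cases n with
    | zero =>
      have : wx K p q * mon K p q (a, ((0 : ℕ) : ℤ), c, d) = mon K p q (a, -((1 : ℕ) : ℤ), c, d) := by
        rw [mon_pos, mon_neg]; simp
      rw [this]; exact Submodule.subset_span ⟨_, rfl⟩
    | succ n =>
      have : wx K p q * mon K p q (a, ((n + 1 : ℕ) : ℤ), c, d) =
          (p - 1)⁻¹ • (p ^ (n + 1) • mon K p q (a + 1, (n : ℤ), c, d)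
            - mon K p q (a, (n : ℤ), c, d)) := by
        rw [mon_pos, mon_pos, mon_pos, pow_succ', ← z_mul_tail, mul_assoc, ← mul_assoc (wx K p q),
          xy_eq' hp1, smul_mul_assoc, sub_mul, one_mul, smul_mul_assoc, ← mul_assoc (wz K p q),
          z_mul_y_pow, smul_mul_assoc, smul_smul, mul_assoc, pow_succ']
      rw [this]
      exact Submodule.smul_mem _ _ (Submodule.sub_mem _
        (Submodule.smul_mem _ _ (Submodule.subset_span ⟨_, rfl⟩)) (Submodule.subset_span ⟨_, rfl⟩))
  · have : wx K p q * mon K p q (a, -(n : ℤ), c, d) = mon K p q (a, -((n + 1 : ℕ) : ℤ), c, d) := by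
      rw [mon_neg, mon_neg, pow_succ', mul_assoc]
    rw [this]; exact Submodule.subset_span ⟨_, rfl⟩

include hp hp1 in
lemma y_mul_mon_mem (g : Ix) :
    wy K p q * mon K p q g ∈ Submodule.span K (Set.range (mon K p q)) := by
  obtain ⟨a, b, c, d⟩ := g
  obtain ⟨n, rfl | rfl⟩ := b.eq_nat_or_neg
  · have : wy K p q * mon K p q (a, (n : ℤ), c, d) = mon K p q (a, ((n + 1 : ℕ) : ℤ), c, d) := by
      rw [mon_pos, mon_pos, pow_succ', mul_assoc]
    rw [this]; exact Submodule.subset_span ⟨_, rfl⟩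
  · cases n with
    | zero =>
      have : wy K p q * mon K p q (a, -((0 : ℕ) : ℤ), c, d) = mon K p q (a, ((1 : ℕ) : ℤ), c, d) := by
        rw [mon_pos, mon_neg]; simp
      rw [this]; exact Submodule.subset_span ⟨_, rfl⟩
    | succ n =>
      have : wy K p q * mon K p q (a, -((n + 1 : ℕ) : ℤ), c, d) =
          (p - 1)⁻¹ • (p⁻¹ ^ n • mon K p q (a + 1, -(n : ℤ), c, d)
            - mon K p q (a, -(n : ℤ), c, d)) := by
        rw [mon_neg, mon_neg, mon_neg, pow_succ', ← z_mul_tail, mul_assoc, ← mul_assoc (wy K p q),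
          yx_eq hp1, smul_mul_assoc, sub_mul, one_mul, ← mul_assoc (wz K p q),
          z_mul_x_pow hp, smul_mul_assoc, mul_assoc]
      rw [this]
      exact Submodule.smul_mem _ _ (Submodule.sub_mem _
        (Submodule.smul_mem _ _ (Submodule.subset_span ⟨_, rfl⟩)) (Submodule.subset_span ⟨_, rfl⟩))

/-- A subspace stable under the generators is stable under all of `B`. -/
lemma stable_of_gens {V : Type*} [AddCommGroup V] [Module K V] (π : B →ₐ[K] Module.End K V)
    (W : Submodule K V) (hx : ∀ v ∈ W, π (wx K p q) v ∈ W) (hy : ∀ v ∈ W, π (wy K p q) v ∈ W)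
    (hs : ∀ v ∈ W, π (ws K p q) v ∈ W) (ht : ∀ v ∈ W, π (wt K p q) v ∈ W) (b : B) :
    ∀ v ∈ W, π b v ∈ W := by
  induction b using gen_induction with
  | hx => exact hx
  | hy => exact hy
  | hs => exact hs
  | ht => exact ht
  | hc c =>
    intro v hv
    rw [AlgHom.commutes, Module.algebraMap_end_apply]
    exact W.smul_mem _ hv
  | hadd a b ha hb =>
    intro v hv
    rw [map_add]
    exact W.add_mem (ha v hv) (hb v hv)
  | hmul a b ha hb =>
    intro v hv
    rw [map_mul]
    exact ha _ (hb v hv)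

include hp hp1 in
lemma exists_repr (b : B) : ∃ c : Ix →₀ K, b = linearCombination K (mon K p q) c := by
  have key := stable_of_gens (Algebra.lmul K B) (Submodule.span K (Set.range (mon K p q)))
    ?_ ?_ ?_ ?_ b 1 (Submodule.subset_span ⟨0, by simp [mon, tail]⟩)
  · obtain ⟨c, hc⟩ := (Finsupp.mem_span_range_iff_exists_finsupp).1 key
    exact ⟨c, by simpa [linearCombination_apply] using hc.symm⟩
  all_goals
    intro v hv
    refine (Submodule.span_le (p := Submodule.comap (Algebra.lmul K B _)
      (Submodule.span K (Set.range (mon K p q))))).2 ?_ hv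
    rintro _ ⟨g, rfl⟩
  · exact x_mul_mon_mem hp1 g
  · exact y_mul_mon_mem hp hp1 g
  · obtain ⟨a, b, c, d⟩ := g
    change ws K p q * _ ∈ Submodule.span K (Set.range (mon K p q))
    rw [s_mul_mon]
    exact Submodule.smul_mem _ _ (Submodule.subset_span ⟨_, rfl⟩)
  · obtain ⟨a, b, c, d⟩ := g
    change wt K p q * _ ∈ Submodule.span K (Set.range (mon K p q))
    rw [t_mul_mon]
    exact Submodule.subset_span ⟨_, rfl⟩

/-- `v` is a nonzero multiple of `M_g` plus terms with a larger exponent of `Z` and otherwise the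
same exponents. -/
def Tri (g : Ix) (v : Ix →₀ K) : Prop := v g ≠ 0 ∧ ∀ h, v h ≠ 0 → g.1 ≤ h.1 ∧ h.2 = g.2

lemma opX_apply_zero (v : Ix →₀ K) (b : ℤ) (c d : ℕ) :
    opX p v (0, b - 1, c, d) = -(p - 1)⁻¹ * v (0, b, c, d) := by
  induction v using Finsupp.induction_linear with
  | zero => simp
  | add f g hf hg => rw [map_add, Finsupp.add_apply, hf, hg, Finsupp.add_apply, mul_add]
  | single g r =>
    obtain ⟨a', b', c', d'⟩ := g
    rw [single_eq, map_smul, opX_single]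
    simp [single_apply, Prod.ext_iff]
    split_ifs <;> simp_all
    ring

lemma opX_apply_succ (v : Ix →₀ K) (a : ℕ) (b : ℤ) (c d : ℕ) :
    opX p v (a + 1, b - 1, c, d) =
      (p - 1)⁻¹ * (p ^ b * v (a, b, c, d) - v (a + 1, b, c, d)) := by
  induction v using Finsupp.induction_linear with
  | zero => simp
  | add f g hf hg =>
    rw [map_add, Finsupp.add_apply, hf, hg, Finsupp.add_apply, Finsupp.add_apply]; ring
  | single g r =>
    obtain ⟨a', b', c', d'⟩ := g
    rw [single_eq, map_smul, opX_single]
    simp only [Finsupp.smul_apply, Finsupp.sub_apply, smul_eq_mul, single_apply, Prod.mk.injEq,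
      add_left_inj, sub_left_inj]
    by_cases hb : b' = b
    · subst hb
      split_ifs <;> ring
    · simp [hb]

include hp1 in
lemma Tri.opX {a : ℕ} {b : ℤ} {c d : ℕ} {v : Ix →₀ K} (h : Tri (a, b, c, d) v) :
    Tri (a, b - 1, c, d) (opX p v) := by
  have h1 : (p - 1)⁻¹ ≠ 0 := inv_ne_zero (sub_ne_zero.2 hp1)
  refine ⟨?_, ?_⟩
  · cases a with
    | zero => rw [opX_apply_zero]; exact mul_ne_zero (neg_ne_zero.2 h1) h.1
    | succ a =>
      have : v (a, b, c, d) = 0 := by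
        by_contra hne
        have := (h.2 _ hne).1
        simp at this
      rw [opX_apply_succ, this, mul_zero, zero_sub]
      exact mul_ne_zero h1 (neg_ne_zero.2 h.1)
  · rintro ⟨a', b', c', d'⟩ hne
    obtain ⟨b', rfl⟩ : ∃ k : ℤ, b' = k - 1 := ⟨b' + 1, by ring⟩
    cases a' with
    | zero =>
      rw [opX_apply_zero] at hne
      have := h.2 _ (right_ne_zero_of_mul hne)
      simp_all
    | succ a' =>
      rw [opX_apply_succ] at hne
      have hne' := right_ne_zero_of_mul hne
      by_cases h0 : v (a' + 1, b', c', d') = 0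
      · rw [h0, sub_zero] at hne'
        have := h.2 _ (right_ne_zero_of_mul hne')
        simp_all
        omega
      · have := h.2 _ h0
        simp_all

lemma tri_single (g : Ix) : Tri g (single g (1 : K)) := by
  refine ⟨by simp, fun h hne => ?_⟩
  have : g = h := by
    by_contra hn
    exact hne (by simp [hn])
  subst this
  exact ⟨le_rfl, rfl⟩

lemma ev_mul' (a b : B) : ev hp hp1 (a * b) = rep hp hp1 a (ev hp hp1 b) := by
  rw [ev, map_mul]; rfl

lemma ev_one : ev hp hp1 (1 : B) = single 0 1 := by simp [ev]

lemma ev_tail (a c d : ℕ) : ev hp hp1 (tail K p q a c d) = single (a, 0, c, d) 1 := by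
  induction a with
  | zero =>
    rw [tail, pow_zero, one_mul]
    induction d with
    | zero =>
      rw [pow_zero, one_mul]
      induction c with
      | zero => rw [pow_zero, ev_one]; rfl
      | succ c ih => rw [pow_succ', ev_mul', ih, rep_s, opS_single]; simp
    | succ d ih => rw [pow_succ', mul_assoc, ev_mul', ih, rep_t, opT_single]
  | succ a ih => rw [← z_mul_tail, ev_mul', ih, rep_z_single]; simp

lemma ev_mon_pos (a n c d : ℕ) :
    ev hp hp1 (mon K p q (a, (n : ℤ), c, d)) = single (a, (n : ℤ), c, d) 1 := by
  rw [mon_pos]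
  induction n with
  | zero => simp [ev_tail]
  | succ n ih => rw [pow_succ', mul_assoc, ev_mul', ih, rep_y, opY_single]; simp

lemma tri_mon (g : Ix) : Tri g (ev hp hp1 (mon K p q g)) := by
  obtain ⟨a, b, c, d⟩ := g
  obtain ⟨n, rfl | rfl⟩ := b.eq_nat_or_neg
  · rw [ev_mon_pos]; exact tri_single _
  · rw [mon_neg]
    induction n with
    | zero => simpa [ev_tail] using tri_single (K := K) (a, 0, c, d)
    | succ n ih =>
      rw [pow_succ', mul_assoc, ev_mul', rep_x]
      have := ih.opX hp1
      rwa [show -((n + 1 : ℕ) : ℤ) = -(n : ℤ) - 1 by push_cast; ring]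

/-- Triangularity of the spanning set: if `P` is closed under lowering the exponent of `z` and the
image of a linear combination of the monomials vanishes on `P`, so do its coefficients. -/
lemma coeff_vanish (c : Ix →₀ K) (P : Ix → Prop)
    (hP : ∀ a a' r, a' ≤ a → P (a, r) → P (a', r))
    (h : ∀ g, P g → ev hp hp1 (linearCombination K (mon K p q) c) g = 0) (g : Ix) (hg : P g) :
    c g = 0 := by
  obtain ⟨n, r⟩ := g
  induction n using Nat.strong_induction_on with
  | _ n ih =>
    by_contra hne
    have h0 := h _ hg
    rw [← evL_apply, linearCombination_apply, Finsupp.sum, map_sum, Finsupp.finsetSum_apply,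
      Finset.sum_eq_single (n, r)] at h0
    · rw [map_smul, Finsupp.smul_apply, smul_eq_mul, evL_apply] at h0
      exact mul_ne_zero hne (tri_mon hp hp1 (n, r)).1 h0
    · rintro ⟨n', r'⟩ hmem hne'
      by_contra hh
      rw [map_smul, Finsupp.smul_apply, smul_eq_mul, evL_apply] at hh
      obtain ⟨h1, h2⟩ := (tri_mon hp hp1 (n', r')).2 _ (right_ne_zero_of_mul hh)
      simp only at h1 h2
      subst h2
      rcases h1.lt_or_eq with hlt | rfl
      · exact (Finsupp.mem_support_iff.1 hmem) (ih n' hlt (hP _ _ _ h1 hg))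
      · exact hne' rfl
    · intro hmem
      exact absurd (Finsupp.notMem_support_iff.1 hmem) hne

lemma ev_eq_zero {b : B} (h : ev hp hp1 b = 0) : b = 0 := by
  obtain ⟨c, rfl⟩ := exists_repr hp hp1 b
  have : c = 0 := by
    ext g
    exact coeff_vanish hp hp1 c (fun _ => True) (fun _ _ _ _ _ => trivial) (fun g _ => by rw [h]; rfl) g trivial
  simp [this]

lemma ev_injective {a b : B} (h : ev hp hp1 a = ev hp hp1 b) : a = b := by
  rw [← sub_eq_zero]
  apply ev_eq_zero hp hp1
  rw [← evL_apply, map_sub, evL_apply, evL_apply, h, sub_self]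

lemma dvd_z {b : B} (h : ∀ r, ev hp hp1 b (0, r) = 0) : ∃ v, b = v * wz K p q := by
  obtain ⟨c, rfl⟩ := exists_repr hp hp1 b
  have hc := coeff_vanish hp hp1 c (fun g => g.1 = 0) (by intro a a' r h1 h2; simp at *; omega)
    (by rintro ⟨a, r⟩ rfl; exact h r)
  have : linearCombination K (mon K p q) c ∈ LinearMap.range (LinearMap.mulRight K (wz K p q)) := by
    rw [linearCombination_apply]
    refine Submodule.sum_mem _ fun g hg => Submodule.smul_mem _ _ ?_
    obtain ⟨a, b, c', d⟩ := g
    cases a with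
    | zero => exact absurd (hc _ rfl) (Finsupp.mem_support_iff.1 hg)
    | succ a => exact ⟨mon K p q (a, b, c', d), mon_mul_z _ _ _ _⟩
  obtain ⟨v, hv⟩ := this
  exact ⟨v, hv.symm⟩

lemma dvd_s {b : B} (h : ∀ a b' d, ev hp hp1 b (a, b', 0, d) = 0) : ∃ v, b = v * ws K p q := by
  obtain ⟨c, rfl⟩ := exists_repr hp hp1 b
  have hc := coeff_vanish hp hp1 c (fun g => g.2.2.1 = 0) (by intro a a' r h1 h2; simpa using h2)
    (by rintro ⟨a, b, c, d⟩ hg; simp only at hg; subst hg; exact h _ _ _)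
  have : linearCombination K (mon K p q) c ∈ LinearMap.range (LinearMap.mulRight K (ws K p q)) := by
    rw [linearCombination_apply]
    refine Submodule.sum_mem _ fun g hg => Submodule.smul_mem _ _ ?_
    obtain ⟨a, b, c', d⟩ := g
    cases c' with
    | zero => exact absurd (hc _ rfl) (Finsupp.mem_support_iff.1 hg)
    | succ c' => exact ⟨mon K p q (a, b, c', d), mon_mul_s _ _ _ _⟩
  obtain ⟨v, hv⟩ := this
  exact ⟨v, hv.symm⟩

lemma dvd_t {b : B} (h : ∀ a b' c, ev hp hp1 b (a, b', c, 0) = 0) : ∃ v, b = wt K p q * v := by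
  obtain ⟨c, rfl⟩ := exists_repr hp hp1 b
  have hc := coeff_vanish hp hp1 c (fun g => g.2.2.2 = 0) (by intro a a' r h1 h2; simpa using h2)
    (by rintro ⟨a, b, c, d⟩ hg; simp only at hg; subst hg; exact h _ _ _)
  have : linearCombination K (mon K p q) c ∈ LinearMap.range (LinearMap.mulLeft K (wt K p q)) := by
    rw [linearCombination_apply]
    refine Submodule.sum_mem _ fun g hg => Submodule.smul_mem _ _ ?_
    obtain ⟨a, b, c', d⟩ := g
    cases d with
    | zero => exact absurd (hc _ rfl) (Finsupp.mem_support_iff.1 hg)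
    | succ d => exact ⟨mon K p q (a, b, c', d), t_mul_mon _ _ _ _⟩
  obtain ⟨v, hv⟩ := this
  exact ⟨v, hv.symm⟩

/-- The combinations of monomials whose parts of negative degree in `Y` are divisible by `Z - 1`;
this subspace contains the image of `B`. -/
def negW (K : Type*) [Field K] : Submodule K (Ix →₀ K) :=
  Submodule.span K ({v | ∃ (a n c d : ℕ), v = single (a, (n : ℤ), c, d) 1} ∪
    {v | ∃ (a : ℕ) (b : ℤ) (c d : ℕ), v = single (a + 1, b, c, d) 1 - single (a, b, c, d) 1})

lemma negW_pos {a c d : ℕ} {b : ℤ} (hb : 0 ≤ b) : single (a, b, c, d) 1 ∈ negW K := by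
  obtain ⟨n, rfl⟩ := Int.eq_ofNat_of_zero_le hb
  exact Submodule.subset_span (Or.inl ⟨a, n, c, d, rfl⟩)

lemma negW_diff (a c d : ℕ) (b : ℤ) :
    single (a + 1, b, c, d) 1 - single (a, b, c, d) 1 ∈ negW K :=
  Submodule.subset_span (Or.inr ⟨a, b, c, d, rfl⟩)

lemma ev_mem_negW (b : B) : ev hp hp1 b ∈ negW K := by
  refine stable_of_gens (rep hp hp1) (negW K) ?_ ?_ ?_ ?_ b _
    (negW_pos (a := 0) (c := 0) (d := 0) le_rfl)
  all_goals
    intro v hv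
    refine (Submodule.span_le (p := Submodule.comap (rep hp hp1 _) (negW K))).2 ?_ hv
    rintro _ (⟨a, n, c, d, rfl⟩ | ⟨a, b, c, d, rfl⟩) <;>
      rw [SetLike.mem_coe, Submodule.mem_comap]
  · rw [rep_x, opX_single]
    refine Submodule.smul_mem _ _ ?_
    cases n with
    | zero => simpa using negW_diff (K := K) a c d (-1)
    | succ n =>
      exact Submodule.sub_mem _ (Submodule.smul_mem _ _ (negW_pos (by simp))) (negW_pos (by simp))
  · rw [rep_x, map_sub, opX_single, opX_single]
    convert Submodule.smul_mem _ (p - 1)⁻¹ (Submodule.sub_mem _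
      (Submodule.smul_mem _ (p ^ b) (negW_diff (K := K) (a + 1) c d (b - 1)))
      (negW_diff (K := K) a c d (b - 1))) using 1
    module
  · rw [rep_y, opY_single]
    exact negW_pos (by positivity)
  · rw [rep_y, map_sub, opY_single, opY_single]
    exact negW_diff _ _ _ _
  · rw [rep_s, opS_single]
    exact Submodule.smul_mem _ _ (negW_pos (by positivity))
  · rw [rep_s, map_sub, opS_single, opS_single, ← smul_sub]
    exact Submodule.smul_mem _ _ (negW_diff _ _ _ _)
  · rw [rep_t, opT_single]
    exact negW_pos (by positivity)
  · rw [rep_t, map_sub, opT_single, opT_single]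
    exact negW_diff _ _ _ _

/-- Monomial elements of `B` have nonnegative degree in `Y`: no `Y^{-k} Z^a T^d S^c` with `k > 0`
lies in `B`. -/
lemma monomial_nonneg {b : B} {g : Ix} {r : K} (hr : r ≠ 0) (h : ev hp hp1 b = single g r) :
    0 ≤ g.2.1 := by
  by_contra hneg
  push Not at hneg
  let L : (Ix →₀ K) →ₗ[K] K := linearCombination K fun g : Ix => if g.2.1 < 0 then (1 : K) else 0
  have hL : negW K ≤ LinearMap.ker L := by
    refine Submodule.span_le.2 ?_
    rintro _ (⟨a, n, c, d, rfl⟩ | ⟨a, b, c, d, rfl⟩) <;> simp [L]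
  have := hL (ev_mem_negW hp hp1 b)
  rw [h] at this
  simp [L, hneg] at this
  exact hr this

/-! ### Leading terms -/

lemma ev_mul_supp {a b : B} {k : Ix} (h : ev hp hp1 (a * b) k ≠ 0) :
    ∃ g h, k = g + h ∧ ev hp hp1 a g ≠ 0 ∧ ev hp hp1 b h ≠ 0 := by
  rw [ev_mul, Finsupp.sum, Finsupp.finsetSum_apply] at h
  obtain ⟨m, hm, hne⟩ := Finset.exists_ne_zero_of_sum_ne_zero h
  rw [Finsupp.smul_apply, smul_eq_mul] at hne
  obtain ⟨g, hg, hg'⟩ := rho_apply_ne_zero (right_ne_zero_of_mul hne)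
  exact ⟨g, m, hg, hg', by simpa using hm⟩

lemma ev_mul_unique {a b : B} {g₀ h₀ : Ix}
    (H : ∀ g h, ev hp hp1 a g ≠ 0 → ev hp hp1 b h ≠ 0 → g₀ + h₀ = g + h → h = h₀) :
    ev hp hp1 (a * b) (g₀ + h₀) = ev hp hp1 b h₀ * (ev hp hp1 a g₀ * chi p q g₀ h₀) := by
  rw [ev_mul, Finsupp.sum, Finsupp.finsetSum_apply, Finset.sum_eq_single h₀, Finsupp.smul_apply,
    rho_apply_add, smul_eq_mul]
  · intro h hh hne
    by_contra hcon
    rw [Finsupp.smul_apply, smul_eq_mul] at hcon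
    obtain ⟨g, hg, hg'⟩ := rho_apply_ne_zero (right_ne_zero_of_mul hcon)
    exact hne (H g h hg' (by simpa using hh) hg)
  · intro hh
    rw [Finsupp.notMem_support_iff.1 hh, zero_smul, Finsupp.zero_apply]

section Order

variable {Λ : Type*} [AddCommMonoid Λ] [LinearOrder Λ] [IsOrderedCancelAddMonoid Λ]

/-- `g` is the exponent of the leading monomial of `v` for the order pulled back along `κ`. -/
def IsTop (κ : Ix →+ Λ) (v : Ix →₀ K) (g : Ix) : Prop := v g ≠ 0 ∧ ∀ h, v h ≠ 0 → κ h ≤ κ g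

omit [IsOrderedCancelAddMonoid Λ] in
lemma exists_isTop (κ : Ix →+ Λ) {v : Ix →₀ K} (hv : v ≠ 0) : ∃ g, IsTop κ v g := by
  obtain ⟨g, hg, hmax⟩ := Finset.exists_max_image v.support κ (Finsupp.support_nonempty_iff.2 hv)
  exact ⟨g, by simpa using hg, fun h hh => hmax h (by simpa using hh)⟩

omit [IsOrderedCancelAddMonoid Λ] in
lemma IsTop.unique {κ : Ix →+ Λ} (hκ : Function.Injective κ) {v : Ix →₀ K} {g h : Ix}
    (hg : IsTop κ v g) (hh : IsTop κ v h) : g = h :=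
  hκ (le_antisymm (hh.2 _ hg.1) (hg.2 _ hh.1))

lemma IsTop.mul (hq : q ≠ 0) {κ : Ix →+ Λ} (hκ : Function.Injective κ) {a b : B} {g h : Ix}
    (hg : IsTop κ (ev hp hp1 a) g) (hh : IsTop κ (ev hp hp1 b) h) :
    IsTop κ (ev hp hp1 (a * b)) (g + h) := by
  refine ⟨?_, fun k hk => ?_⟩
  · rw [ev_mul_unique]
    · exact mul_ne_zero hh.1 (mul_ne_zero hg.1 (chi_ne_zero hp hq _ _))
    · intro g' h' hg' hh' heq
      have h1 := hg.2 g' hg'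
      have h2 := hh.2 h' hh'
      have h3 : κ g + κ h = κ g' + κ h' := by rw [← map_add, ← map_add, heq]
      exact hκ ((add_eq_add_iff_eq_and_eq h1 h2).1 h3.symm).2
  · obtain ⟨g', h', rfl, hg', hh'⟩ := ev_mul_supp hp hp1 hk
    rw [map_add, map_add]
    exact add_le_add (hg.2 _ hg') (hh.2 _ hh')

end Order

/-- The lexicographic order on exponents. -/
def lexKey : Ix →+ (ℕ ×ₗ ℤ ×ₗ ℕ ×ₗ ℕ) where
  toFun g := toLex (g.1, toLex (g.2.1, toLex g.2.2))
  map_zero' := rfl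
  map_add' _ _ := rfl

/-- The reverse lexicographic order on exponents. -/
def revKey : Ix →+ (ℕ ×ₗ ℤ ×ₗ ℕ ×ₗ ℕ)ᵒᵈ where
  toFun g := OrderDual.toDual (lexKey g)
  map_zero' := rfl
  map_add' _ _ := rfl

lemma lexKey_injective : Function.Injective lexKey := fun _ _ h => h

lemma revKey_injective : Function.Injective revKey := fun _ _ h => h

lemma revKey_le {g h : Ix} : revKey g ≤ revKey h ↔ lexKey h ≤ lexKey g := Iff.rfl

lemma eq_single_of_top {v : Ix →₀ K} {g : Ix} (h1 : IsTop lexKey v g) (h2 : IsTop revKey v g) :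
    v = single g (v g) := by
  ext h
  by_cases hv : v h = 0
  · rw [hv, single_apply]
    split_ifs with e
    · rw [e, hv]
    · rfl
  · have : h = g := lexKey_injective (le_antisymm (h1.2 h hv) (revKey_le.1 (h2.2 h hv)))
    rw [this, single_eq_same]

lemma isTop_single {Λ : Type*} [AddCommMonoid Λ] [LinearOrder Λ] (κ : Ix →+ Λ) (g : Ix) {r : K}
    (hr : r ≠ 0) : IsTop κ (single g r) g := by
  refine ⟨by simpa using hr, fun h hh => ?_⟩
  have : g = h := by
    by_contra hn
    exact hh (by simp [hn])
  rw [this]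

lemma ev_zero : ev hp hp1 (0 : B) = 0 := (evL hp hp1).map_zero

lemma ev_ne_zero {b : B} (hb : b ≠ 0) : ev hp hp1 b ≠ 0 := fun h => hb (ev_eq_zero hp hp1 h)

include hp hp1 in
lemma noZeroDivisors (hq : q ≠ 0) : NoZeroDivisors B where
  eq_zero_or_eq_zero_of_mul_eq_zero := by
    intro a b hab
    by_contra! hne
    obtain ⟨g, hg⟩ := exists_isTop lexKey (ev_ne_zero hp hp1 hne.1)
    obtain ⟨h, hh⟩ := exists_isTop lexKey (ev_ne_zero hp hp1 hne.2)
    refine (hg.mul hp hp1 hq lexKey_injective hh).1 ?_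
    rw [hab, ev_zero, Finsupp.zero_apply]

include hp hp1 in
lemma nontrivialB : Nontrivial B := by
  refine ⟨⟨0, 1, fun h => ?_⟩⟩
  have := congrArg (ev hp hp1) h
  rw [ev_zero, ev_one] at this
  exact one_ne_zero (single_eq_zero.1 this.symm)

/-- The factors of a monomial are monomials. -/
lemma factor_mono (hq : q ≠ 0) {a b : B} {k : Ix} {r : K} (hr : r ≠ 0)
    (h : ev hp hp1 (a * b) = single k r) :
    ∃ (g g' : Ix) (α β : K), α ≠ 0 ∧ β ≠ 0 ∧ ev hp hp1 a = single g α ∧ ev hp hp1 b = single g' β ∧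
      g + g' = k := by
  have hab : a * b ≠ 0 := by
    intro h0
    rw [h0, ev_zero] at h
    exact hr (single_eq_zero.1 h.symm)
  have ha := ev_ne_zero hp hp1 (left_ne_zero_of_mul hab)
  have hb := ev_ne_zero hp hp1 (right_ne_zero_of_mul hab)
  obtain ⟨g₁, hg₁⟩ := exists_isTop lexKey ha
  obtain ⟨h₁, hh₁⟩ := exists_isTop lexKey hb
  obtain ⟨g₂, hg₂⟩ := exists_isTop revKey ha
  obtain ⟨h₂, hh₂⟩ := exists_isTop revKey hb
  have e1 := hg₁.mul hp hp1 hq lexKey_injective hh₁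
  have e2 := hg₂.mul hp hp1 hq revKey_injective hh₂
  rw [h] at e1 e2
  have e1 := e1.unique lexKey_injective (isTop_single _ _ hr)
  have e2 := e2.unique revKey_injective (isTop_single _ _ hr)
  have h3 : lexKey g₂ + lexKey h₂ = lexKey g₁ + lexKey h₁ := by
    rw [← map_add, ← map_add, e1, e2]
  obtain ⟨h4, h5⟩ := (add_eq_add_iff_eq_and_eq (hg₁.2 _ hg₂.1) (hh₁.2 _ hh₂.1)).1 h3
  obtain rfl := lexKey_injective h4
  obtain rfl := lexKey_injective h5
  exact ⟨g₂, h₂, _, _, hg₁.1, hh₁.1, eq_single_of_top hg₁ hg₂, eq_single_of_top hh₁ hh₂, e1⟩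

lemma ev_smul (c : K) (b : B) : ev hp hp1 (c • b) = c • ev hp hp1 b := (evL hp hp1).map_smul c b

/-- A conjugate of a monomial is a scalar multiple of it. -/
lemma conj_mono (hq : q ≠ 0) {n u u' : B} (hn : n ≠ 0) (h : n * u = u' * n) {k : Ix}
    (hu : ev hp hp1 u = single k 1) : ∃ c : K, c ≠ 0 ∧ u' = c • u := by
  have := noZeroDivisors hp hp1 hq
  have hn' := ev_ne_zero hp hp1 hn
  have hu0 : u ≠ 0 := by
    rintro rfl
    rw [ev_zero] at hu
    exact one_ne_zero (single_eq_zero.1 hu.symm)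
  have hu'0 : u' ≠ 0 := left_ne_zero_of_mul (h ▸ mul_ne_zero hn hu0)
  have hu' := ev_ne_zero hp hp1 hu'0
  have aux : ∀ {Λ : Type} [AddCommMonoid Λ] [LinearOrder Λ] [IsOrderedCancelAddMonoid Λ]
      (κ : Ix →+ Λ) (_ : Function.Injective κ), IsTop κ (ev hp hp1 u') k := by
    intro Λ _ _ _ κ hκ
    obtain ⟨g, hg⟩ := exists_isTop κ hn'
    obtain ⟨k', hk'⟩ := exists_isTop κ hu'
    have hk : IsTop κ (ev hp hp1 u) k := by rw [hu]; exact isTop_single _ _ one_ne_zero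
    have e1 := hg.mul hp hp1 hq hκ hk
    have e2 := hk'.mul hp hp1 hq hκ hg
    rw [h] at e1
    have e3 := e1.unique hκ e2
    rw [add_comm] at e3
    rwa [add_right_cancel e3]
  have h1 := aux lexKey lexKey_injective
  have h2 := aux revKey revKey_injective
  refine ⟨ev hp hp1 u' k, h1.1, ev_injective hp hp1 ?_⟩
  rw [ev_smul, hu, smul_single_one]
  exact eq_single_of_top h1 h2

lemma ev_y : ev hp hp1 (wy K p q) = single (0, 1, 0, 0) 1 := by
  have := ev_mon_pos (q := q) hp hp1 0 1 0 0
  simpa [mon, tail] using this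

lemma ev_z : ev hp hp1 (wz K p q) = single (1, 0, 0, 0) 1 := by
  have := ev_tail (q := q) hp hp1 1 0 0
  simpa [tail] using this

lemma ev_s : ev hp hp1 (ws K p q) = single (0, 0, 1, 0) 1 := by
  have := ev_tail (q := q) hp hp1 0 1 0
  simpa [tail] using this

lemma ev_t : ev hp hp1 (wt K p q) = single (0, 0, 0, 1) 1 := by
  have := ev_tail (q := q) hp hp1 0 0 1
  simpa [tail] using this

lemma ev_algebraMap (c : K) : ev hp hp1 (algebraMap K B c) = single 0 c := by
  rw [Algebra.algebraMap_eq_smul_one, ev_smul, ev_one, smul_single_one]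

/-- The monomials `1, z, s, t` have only trivial factorisations. -/
lemma atom_factor (hq : q ≠ 0) {a b : B} {k : Ix} {r : K} (hr : r ≠ 0)
    (h : ev hp hp1 (a * b) = single k r) (hk : k.2.1 = 0) (hk1 : k.1 + k.2.2.1 + k.2.2.2 ≤ 1) :
    (∃ α : K, α ≠ 0 ∧ a = algebraMap K B α) ∨ (∃ β : K, β ≠ 0 ∧ b = algebraMap K B β) := by
  obtain ⟨g, g', α, β, hα, hβ, ha, hb, rfl⟩ := factor_mono hp hp1 hq hr h
  have h1 := monomial_nonneg hp hp1 hα ha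
  have h2 := monomial_nonneg hp hp1 hβ hb
  obtain ⟨a1, b1, c1, d1⟩ := g
  obtain ⟨a2, b2, c2, d2⟩ := g'
  simp only [Prod.mk_add_mk] at hk hk1 h1 h2
  have : (a1 = 0 ∧ c1 = 0 ∧ d1 = 0) ∨ (a2 = 0 ∧ c2 = 0 ∧ d2 = 0) := by omega
  obtain rfl : b1 = 0 := by omega
  obtain rfl : b2 = 0 := by omega
  rcases this with ⟨rfl, rfl, rfl⟩ | ⟨rfl, rfl, rfl⟩
  · exact Or.inl ⟨α, hα, ev_injective hp hp1 (ha.trans (ev_algebraMap hp hp1 α).symm)⟩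
  · exact Or.inr ⟨β, hβ, ev_injective hp hp1 (hb.trans (ev_algebraMap hp hp1 β).symm)⟩

/-! ### Normal elements of `B[w]` -/

open Polynomial

include hp hp1 in
lemma natDegree_of_isUnit (hq : q ≠ 0) {v : Polynomial B} (hv : IsUnit v) : v.natDegree = 0 := by
  have := noZeroDivisors hp hp1 hq
  have := nontrivialB (q := q) hp hp1
  obtain ⟨w, hw⟩ := hv.exists_right_inv
  have h0 : v * w ≠ 0 := by rw [hw]; exact one_ne_zero
  have := congrArg natDegree hw
  rw [natDegree_mul (left_ne_zero_of_mul h0) (right_ne_zero_of_mul h0), natDegree_one] at this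
  omega

include hp hp1 in
lemma isUnit_algebraMap {α : K} (hα : α ≠ 0) : IsUnit (C (algebraMap K B α) : Polynomial B) := by
  have := nontrivialB (q := q) hp hp1
  exact ((IsUnit.mk0 α hα).map (algebraMap K B)).map C

lemma irreducible_C (hq : q ≠ 0) {u : B} {k : Ix} (hu : ev hp hp1 u = single k 1)
    (hk : k.2.1 = 0) (hk1 : k.1 + k.2.2.1 + k.2.2.2 = 1) : Irreducible (C u : Polynomial B) := by
  have := noZeroDivisors hp hp1 hq
  have := nontrivialB (q := q) hp hp1
  have hu0 : u ≠ 0 := by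
    rintro rfl
    rw [ev_zero] at hu
    exact one_ne_zero (single_eq_zero.1 hu.symm)
  refine ⟨fun hunit => ?_, fun a b hab => ?_⟩
  · obtain ⟨v, hv⟩ := hunit.exists_right_inv
    have h0 := congrArg (fun f => coeff f 0) hv
    simp only [coeff_C_mul, coeff_one_zero] at h0
    have h1 := congrArg (ev hp hp1) h0
    rw [ev_one] at h1
    obtain ⟨g, g', α, β, hα, hβ, ha, hb, hsum⟩ := factor_mono hp hp1 hq one_ne_zero h1
    rw [hu] at ha
    have hg : k = g := by
      rcases (single_eq_single_iff _ _ _ _).1 ha with h | h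
      · exact h.1
      · exact absurd h.1 one_ne_zero
    subst hg
    obtain ⟨a1, b1, c1, d1⟩ := k
    obtain ⟨a2, b2, c2, d2⟩ := g'
    simp only [Prod.mk_add_mk, Prod.ext_iff, Prod.fst_zero, Prod.snd_zero] at hsum hk1
    omega
  · have h0 : a * b ≠ 0 := by rw [← hab]; simpa using hu0
    have hdeg := congrArg natDegree hab
    rw [natDegree_C, natDegree_mul (left_ne_zero_of_mul h0) (right_ne_zero_of_mul h0)] at hdeg
    obtain ⟨a, rfl⟩ : ∃ a', a = C a' := ⟨_, eq_C_of_natDegree_eq_zero (by omega)⟩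
    obtain ⟨b, rfl⟩ : ∃ b', b = C b' := ⟨_, eq_C_of_natDegree_eq_zero (by omega)⟩
    rw [← C_mul] at hab
    rw [C_injective hab] at hu
    rcases atom_factor hp hp1 hq one_ne_zero hu hk hk1.le with ⟨α, hα, rfl⟩ | ⟨α, hα, rfl⟩
    · exact Or.inl (isUnit_algebraMap hp hp1 hα)
    · exact Or.inr (isUnit_algebraMap hp hp1 hα)

/-- Normality of `n`, in the one-sided form `n R ⊆ R n`. -/
def IsNorm {R : Type*} [Mul R] (n : R) : Prop := ∀ r, ∃ r', n * r = r' * n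

lemma isNorm_of_gens {u : B} (hx : ∃ r', u * wx K p q = r' * u) (hy : ∃ r', u * wy K p q = r' * u)
    (hs : ∃ r', u * ws K p q = r' * u) (ht : ∃ r', u * wt K p q = r' * u) : IsNorm u := by
  intro r
  induction r using gen_induction with
  | hx => exact hx
  | hy => exact hy
  | hs => exact hs
  | ht => exact ht
  | hc c => exact ⟨_, (Algebra.commutes c u).symm⟩
  | hadd a b ha hb =>
    obtain ⟨a', ha⟩ := ha
    obtain ⟨b', hb⟩ := hb
    exact ⟨a' + b', by rw [mul_add, add_mul, ha, hb]⟩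
  | hmul a b ha hb =>
    obtain ⟨a', ha⟩ := ha
    obtain ⟨b', hb⟩ := hb
    exact ⟨a' * b', by rw [← mul_assoc, ha, mul_assoc, hb, mul_assoc]⟩

lemma isNorm_C {u : B} (hu : IsNorm u) : IsNorm (C u : Polynomial B) := by
  intro r
  induction r using Polynomial.induction_on' with
  | add f g hf hg =>
    obtain ⟨a', ha⟩ := hf
    obtain ⟨b', hb⟩ := hg
    exact ⟨a' + b', by rw [mul_add, add_mul, ha, hb]⟩
  | monomial n a =>
    obtain ⟨a', ha⟩ := hu a
    exact ⟨monomial n a', by rw [C_mul_monomial, monomial_mul_C, ha]⟩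

include hp in
lemma isNorm_z : IsNorm (wz K p q) :=
  isNorm_of_gens ⟨p⁻¹ • wx K p q, by rw [z_mul_x hp, smul_mul_assoc]⟩
    ⟨p • wy K p q, by rw [z_mul_y, smul_mul_assoc]⟩ ⟨_, s_mul_z.symm⟩ ⟨_, t_mul_z.symm⟩

lemma isNorm_s : IsNorm (ws K p q) :=
  isNorm_of_gens ⟨_, rel_sx⟩ ⟨_, rel_sy⟩ ⟨_, rfl⟩ ⟨q • wt K p q, by rw [rel_st, smul_mul_assoc]⟩

lemma isNorm_t (hq : q ≠ 0) : IsNorm (wt K p q) :=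
  isNorm_of_gens ⟨_, rel_tx⟩ ⟨_, rel_ty⟩
    ⟨q⁻¹ • ws K p q, by rw [smul_mul_assoc, rel_st, smul_smul, inv_mul_cancel₀ hq, one_smul]⟩ ⟨_, rfl⟩

include hp hp1 in
lemma normal_coeff (hq : q ≠ 0) {n : Polynomial B} (hn0 : n ≠ 0) (hn : IsNorm n) (u : B) :
    ∃ u', ∀ l, n.coeff l * u = u' * n.coeff l := by
  have := noZeroDivisors hp hp1 hq
  by_cases hu : u = 0
  · exact ⟨0, by simp [hu]⟩
  obtain ⟨r, hr⟩ := hn (C u)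
  have hu' : (C u : Polynomial B) ≠ 0 := by simpa using hu
  have hr0 : r ≠ 0 := left_ne_zero_of_mul (hr ▸ mul_ne_zero hn0 hu')
  have hdeg := congrArg natDegree hr
  rw [natDegree_mul hn0 hu', natDegree_mul hr0 hn0, natDegree_C] at hdeg
  obtain ⟨r, rfl⟩ : ∃ a', r = C a' := ⟨_, eq_C_of_natDegree_eq_zero (by omega)⟩
  refine ⟨r, fun l => ?_⟩
  have := congrArg (fun f => coeff f l) hr
  simpa using this

lemma normal_coeff_mono (hq : q ≠ 0) {n : Polynomial B} (hn0 : n ≠ 0) (hn : IsNorm n) {u : B}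
    {k : Ix} (hu : ev hp hp1 u = single k 1) :
    ∃ c : K, c ≠ 0 ∧ ∀ l, n.coeff l * u = c • (u * n.coeff l) := by
  obtain ⟨u', h⟩ := normal_coeff hp hp1 hq hn0 hn u
  obtain ⟨c, hc, rfl⟩ := conj_mono hp hp1 hq (leadingCoeff_ne_zero.2 hn0) (h _) hu
  exact ⟨c, hc, fun l => by rw [h, smul_mul_assoc]⟩

/-- If `m` commutes with a monomial up to a scalar, so does each monomial occurring in `m`. -/
lemma comm_supp {m u : B} {k : Ix} (hu : ev hp hp1 u = single k 1) {c : K}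
    (h : m * u = c • (u * m)) {g : Ix} (hg : ev hp hp1 m g ≠ 0) :
    chi p q g k = c * chi p q k g := by
  have hs : ∀ h, ev hp hp1 u h ≠ 0 → h = k := by
    intro h hh
    by_contra hne
    exact hh (by rw [hu, single_eq_of_ne hne])
  have e1 : ev hp hp1 (m * u) (g + k) = ev hp hp1 m g * chi p q g k := by
    rw [ev_mul_unique hp hp1 (fun g' h' _ hh' _ => hs h' hh'), hu, single_eq_same, one_mul]
  have e2 : ev hp hp1 (u * m) (g + k) = ev hp hp1 m g * chi p q k g := by
    rw [add_comm, ev_mul_unique hp hp1 (fun g' h' hg' _ heq => ?_), hu, single_eq_same, one_mul]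
    rw [hs _ hg'] at heq
    exact (add_left_cancel heq).symm
  have := congrArg (fun v => v (g + k)) (congrArg (ev hp hp1) h)
  simp only [ev_smul, Finsupp.smul_apply, smul_eq_mul] at this
  rw [e1, e2] at this
  refine mul_left_cancel₀ hg ?_
  rw [this]; ring

lemma poly_dvd_right {u : B} {n : Polynomial B} (h : ∀ l, ∃ v, n.coeff l = v * u) :
    ∃ v, n = v * C u := by
  choose f hf using h
  refine ⟨∑ l ∈ n.support, monomial l (f l), ?_⟩
  rw [Finset.sum_mul]
  conv_lhs => rw [n.as_sum_support]
  exact Finset.sum_congr rfl fun l _ => by rw [monomial_mul_C, hf]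

lemma poly_dvd_left {u : B} {n : Polynomial B} (h : ∀ l, ∃ v, n.coeff l = u * v) :
    ∃ v, n = C u * v := by
  choose f hf using h
  refine ⟨∑ l ∈ n.support, monomial l (f l), ?_⟩
  rw [Finset.mul_sum]
  conv_lhs => rw [n.as_sum_support]
  exact Finset.sum_congr rfl fun l _ => by rw [C_mul_monomial, hf]

include hp hp1 in
/-- A normal element of `B[w]` that is not central is divisible by `z`, `s` or `t`. -/
lemma normal_dvd (hq : q ≠ 0) {n : Polynomial B} (hn : IsNorm n) (hnc : ∃ r, n * r ≠ r * n) :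
    (∃ v, n = v * C (wz K p q)) ∨ (∃ v, n = v * C (ws K p q)) ∨ (∃ v, n = C (wt K p q) * v) := by
  have := noZeroDivisors hp hp1 hq
  have := nontrivialB (q := q) hp hp1
  have hn0 : n ≠ 0 := by
    rintro rfl
    obtain ⟨r, hr⟩ := hnc
    simp at hr
  have hy0 : wy K p q ≠ 0 := by
    intro h0
    have := ev_y (q := q) hp hp1
    rw [h0, ev_zero] at this
    exact one_ne_zero (single_eq_zero.1 this.symm)
  obtain ⟨cy, hcy, hy⟩ := normal_coeff_mono hp hp1 hq hn0 hn (ev_y hp hp1)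
  obtain ⟨cz, hcz, hz⟩ := normal_coeff_mono hp hp1 hq hn0 hn (ev_z hp hp1)
  obtain ⟨cs, hcs, hs⟩ := normal_coeff_mono hp hp1 hq hn0 hn (ev_s hp hp1)
  obtain ⟨ct, hct, ht⟩ := normal_coeff_mono hp hp1 hq hn0 hn (ev_t hp hp1)
  obtain ⟨x', hx⟩ := normal_coeff hp hp1 hq hn0 hn (wx K p q)
  -- Conjugating `yx = (p - 1)⁻¹ (z - 1)` shows that the scalar `cz - 1` lies in `yB`.
  have hz1 : cz = 1 := by
    by_contra hne
    have hl : n.leadingCoeff ≠ 0 := leadingCoeff_ne_zero.2 hn0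
    have e1 : n.leadingCoeff * (wy K p q * wx K p q) = (cy • (wy K p q * x')) * n.leadingCoeff := by
      rw [← mul_assoc, leadingCoeff, hy, smul_mul_assoc, mul_assoc, hx, smul_mul_assoc, mul_assoc]
    have e2 : n.leadingCoeff * (wy K p q * wx K p q) =
        ((p - 1)⁻¹ • (cz • wz K p q - 1)) * n.leadingCoeff := by
      rw [yx_eq hp1, mul_smul_comm, mul_sub, mul_one, leadingCoeff, hz, smul_mul_assoc, sub_mul,
        one_mul, smul_mul_assoc]
    have e3 := mul_right_cancel₀ hl (e1.symm.trans e2)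
    have hp1' : p - 1 ≠ 0 := sub_ne_zero.2 hp1
    have e4 : wy K p q * (((p - 1) * cy) • x' - (cz * (p - 1)) • wx K p q)
        = algebraMap K B (cz - 1) := by
      rw [mul_sub, mul_smul_comm, mul_smul_comm, mul_smul, e3, smul_smul, mul_inv_cancel₀ hp1',
        one_smul, z_eq, Algebra.algebraMap_eq_smul_one]
      module
    have e5 := congrArg (ev hp hp1) e4
    rw [ev_algebraMap] at e5
    obtain ⟨g, g', α, β, hα, hβ, hg, hg', hsum⟩ := factor_mono hp hp1 hq (sub_ne_zero.2 hne) e5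
    have h1 := monomial_nonneg hp hp1 hβ hg'
    rw [ev_y] at hg
    rcases (single_eq_single_iff _ _ _ _).1 hg with h | h
    · rw [← h.1] at hsum
      have := congrArg (fun g : Ix => g.2.1) hsum
      simp at this
      omega
    · exact one_ne_zero h.1
  subst hz1
  by_cases hy1 : cy = 1
  · by_cases hs1 : cs = 1
    · by_cases ht1 : ct = 1
      · -- Here `n` commutes with all generators.
        exfalso
        subst hy1 hs1 ht1
        simp only [one_smul] at hy hz hs ht
        have hx1 : ∀ l, n.coeff l * wx K p q = wx K p q * n.coeff l := by
          intro l
          refine mul_left_cancel₀ hy0 ?_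
          rw [← mul_assoc, ← hy, mul_assoc, ← mul_assoc (wy K p q), yx_eq hp1, mul_smul_comm,
            smul_mul_assoc, mul_sub, sub_mul, hz, mul_one, one_mul]
        have hall : ∀ b : B, ∀ l, n.coeff l * b = b * n.coeff l := by
          intro b
          induction b using gen_induction with
          | hx => exact hx1
          | hy => exact hy
          | hs => exact hs
          | ht => exact ht
          | hc c => exact fun l => (Algebra.commutes c _).symm
          | hadd a b ha hb => intro l; rw [mul_add, add_mul, ha, hb]
          | hmul a b ha hb => intro l; rw [← mul_assoc, ha, mul_assoc, hb, mul_assoc]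
        obtain ⟨r, hr⟩ := hnc
        apply hr
        induction r using Polynomial.induction_on' with
        | add f g hf hg =>
          by_cases h1 : n * f = f * n
          · by_cases h2 : n * g = g * n
            · rw [mul_add, add_mul, h1, h2]
            · exact absurd (hg h2) h2
          · exact absurd (hf h1) h1
        | monomial m a =>
          rw [← C_mul_X_pow_eq_monomial, ← mul_assoc, mul_assoc (C a), X_pow_mul, ← mul_assoc]
          congr 1
          ext l
          rw [coeff_mul_C, coeff_C_mul, hall]
      · refine Or.inr (Or.inl (poly_dvd_right fun l => dvd_s hp hp1 fun a b d => ?_))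
        by_contra hne
        have := comm_supp hp hp1 (ev_t hp hp1) (ht l) hne
        simp [chi] at this
        exact ht1 this.symm
    · refine Or.inr (Or.inr (poly_dvd_left fun l => dvd_t hp hp1 fun a b c => ?_))
      by_contra hne
      have := comm_supp hp hp1 (ev_s hp hp1) (hs l) hne
      simp [chi] at this
      exact hs1 this.symm
  · refine Or.inl (poly_dvd_right fun l => dvd_z hp hp1 fun r => ?_)
    by_contra hne
    have := comm_supp hp hp1 (ev_y hp hp1) (hy l) hne
    simp [chi] at this
    exact hy1 this.symm

/-! ### Automorphisms of `B[w]` are triangular -/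

lemma ne_zero_of_ev {u : B} {k : Ix} (hu : ev hp hp1 u = single k 1) : u ≠ 0 := by
  rintro rfl
  rw [ev_zero] at hu
  exact one_ne_zero (single_eq_zero.1 hu.symm)

/-- An automorphism sends each non-central normal atom to an associate of `z`, `s` or `t`, hence to
an element of `B`. -/
lemma natDegree_atom (hq : q ≠ 0) (φ : Polynomial B ≃ₐ[K] Polynomial B) {u r : B} {k : Ix}
    (hu : ev hp hp1 u = single k 1) (hk : k.2.1 = 0) (hk1 : k.1 + k.2.2.1 + k.2.2.2 = 1)
    (hn : IsNorm u) (hnc : u * r ≠ r * u) : (φ (C u)).natDegree = 0 := by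
  have := noZeroDivisors hp hp1 hq
  have hirr : Irreducible (φ (C u)) :=
    (MulEquiv.irreducible_iff φ.toMulEquiv).2 (irreducible_C hp hp1 hq hu hk hk1)
  have hnorm : IsNorm (φ (C u)) := by
    intro f
    obtain ⟨f', hf'⟩ := isNorm_C hn (φ.symm f)
    refine ⟨φ f', ?_⟩
    rw [← map_mul, ← hf', map_mul, AlgEquiv.apply_symm_apply]
  have hcen : ∃ f, φ (C u) * f ≠ f * φ (C u) := by
    refine ⟨φ (C r), fun h => hnc ?_⟩
    rw [← map_mul φ, ← map_mul φ] at h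
    have := φ.injective h
    rw [← C_mul, ← C_mul] at this
    exact C_injective this
  have hz := irreducible_C hp hp1 hq (ev_z hp hp1) rfl rfl
  have hs := irreducible_C hp hp1 hq (ev_s hp hp1) rfl rfl
  have ht := irreducible_C hp hp1 hq (ev_t hp hp1) rfl rfl
  have key : ∀ v : Polynomial B, ∀ w : B, IsUnit v →
      (v * C w).natDegree = 0 ∧ (C w * v).natDegree = 0 := by
    intro v w hv
    have h := natDegree_of_isUnit hp hp1 hq hv
    rw [eq_C_of_natDegree_eq_zero h, ← C_mul, ← C_mul, natDegree_C, natDegree_C]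
    exact ⟨rfl, rfl⟩
  rcases normal_dvd hp hp1 hq hnorm hcen with ⟨v, hv⟩ | ⟨v, hv⟩ | ⟨v, hv⟩
  · rw [hv]
    exact (key v _ ((hirr.isUnit_or_isUnit hv).resolve_right hz.not_isUnit)).1
  · rw [hv]
    exact (key v _ ((hirr.isUnit_or_isUnit hv).resolve_right hs.not_isUnit)).1
  · rw [hv]
    exact (key v _ ((hirr.isUnit_or_isUnit hv).resolve_left ht.not_isUnit)).2

include hp hp1 in
/-- Automorphisms of `B[w]` map `B` into `B`: this holds for `z, s, t`, hence for `x, y` because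
`φ(y) φ(x)` has degree `0`. -/
lemma natDegree_map_C (hq : q ≠ 0) (hq1 : q ≠ 1) (φ : Polynomial B ≃ₐ[K] Polynomial B) (b : B) :
    (φ (C b)).natDegree = 0 := by
  have := noZeroDivisors hp hp1 hq
  have := nontrivialB (q := q) hp hp1
  have hy0 := ne_zero_of_ev hp hp1 (ev_y (q := q) hp hp1)
  have hz0 := ne_zero_of_ev hp hp1 (ev_z (q := q) hp hp1)
  have hs0 := ne_zero_of_ev hp hp1 (ev_s (q := q) hp hp1)
  have ht0 := ne_zero_of_ev hp hp1 (ev_t (q := q) hp hp1)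
  have hone : ∀ {c : K} {m : B}, m ≠ 0 → c • m = m → c = 1 := by
    intro c m hm h
    have h1 : algebraMap K B c * m = algebraMap K B 1 * m := by
      rw [← Algebra.smul_def, h, map_one, one_mul]
    exact (algebraMap K B).injective (mul_right_cancel₀ hm h1)
  have hst : ws K p q * wt K p q ≠ wt K p q * ws K p q := by
    rw [rel_st]
    exact fun h => hq1 (hone (mul_ne_zero ht0 hs0) h)
  have hz := natDegree_atom hp hp1 hq φ (r := wy K p q) (ev_z hp hp1) rfl rfl (isNorm_z hp) (by
    rw [z_mul_y]
    exact fun h => hp1 (hone (mul_ne_zero hy0 hz0) h))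
  have hs := natDegree_atom hp hp1 hq φ (ev_s hp hp1) rfl rfl isNorm_s hst
  have ht := natDegree_atom hp hp1 hq φ (ev_t hp hp1) rfl rfl (isNorm_t hq) hst.symm
  have hyx : (φ (C (wy K p q)) * φ (C (wx K p q))).natDegree = 0 := by
    have h1 : wy K p q * wx K p q = (p - 1)⁻¹ • wz K p q + (-(p - 1)⁻¹) • 1 := by
      rw [yx_eq hp1]
      module
    rw [← map_mul, ← C_mul, h1, C_add, map_add, ← smul_C, ← smul_C, map_smul, map_smul, C_1,
      map_one, eq_C_of_natDegree_eq_zero hz, ← C_1, smul_C, smul_C, ← C_add, natDegree_C]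
  have hx0 : wx K p q ≠ 0 := by
    intro h0
    have h1 := z_eq (K := K) (p := p) (q := q)
    rw [h0, mul_zero, smul_zero, add_zero] at h1
    have h2 := ev_z (q := q) hp hp1
    rw [h1, ev_one] at h2
    rcases (single_eq_single_iff _ _ _ _).1 h2 with h | h
    · simpa using congrArg Prod.fst h.1
    · exact one_ne_zero h.1
  have hφ : ∀ {u : B}, u ≠ 0 → φ (C u) ≠ 0 := fun hu h =>
    hu (C_eq_zero.1 ((map_eq_zero_iff φ φ.injective).1 h))
  rw [natDegree_mul (hφ hy0) (hφ hx0)] at hyx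
  induction b using gen_induction with
  | hx => omega
  | hy => omega
  | hs => exact hs
  | ht => exact ht
  | hc c =>
    have : φ (C (algebraMap K B c)) = C (algebraMap K B c) := φ.commutes c
    rw [this, natDegree_C]
  | hadd a b ha hb =>
    rw [C_add, map_add, eq_C_of_natDegree_eq_zero ha, eq_C_of_natDegree_eq_zero hb, ← C_add,
      natDegree_C]
  | hmul a b ha hb =>
    rw [C_mul, map_mul, eq_C_of_natDegree_eq_zero ha, eq_C_of_natDegree_eq_zero hb, ← C_mul,
      natDegree_C]

include hp hp1 in
lemma exists_restrict (hq : q ≠ 0) (hq1 : q ≠ 1) (φ : Polynomial B ≃ₐ[K] Polynomial B) :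
    ∃ φ₀ : B ≃ₐ[K] B, ∀ u, φ (C u) = C (φ₀ u) := by
  have h : ∀ u, φ (C u) = C ((φ (C u)).coeff 0) := fun u =>
    eq_C_of_natDegree_eq_zero (natDegree_map_C hp hp1 hq hq1 φ u)
  have h' : ∀ u, φ.symm (C u) = C ((φ.symm (C u)).coeff 0) := fun u =>
    eq_C_of_natDegree_eq_zero (natDegree_map_C hp hp1 hq hq1 φ.symm u)
  let f : B →ₐ[K] B :=
    { toFun := fun u => (φ (C u)).coeff 0
      map_one' := by simp
      map_zero' := by simp
      map_mul' := fun a b => by rw [C_mul, map_mul, mul_coeff_zero]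
      map_add' := fun a b => by rw [C_add, map_add, coeff_add]
      commutes' := fun c => by
        have : φ (C (algebraMap K B c)) = C (algebraMap K B c) := φ.commutes c
        rw [this, coeff_C_zero] }
  have hf : ∀ u, φ (C u) = C (f u) := h
  refine ⟨AlgEquiv.ofBijective f ⟨fun a b hab => ?_, fun b => ⟨(φ.symm (C b)).coeff 0, ?_⟩⟩, hf⟩
  · exact C_injective (φ.injective (by rw [hf, hf, hab]))
  · apply C_injective
    rw [← hf, ← h', AlgEquiv.apply_symm_apply]

lemma map_eq_comp (φ : Polynomial B ≃ₐ[K] Polynomial B) {φ₀ : B ≃ₐ[K] B}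
    (h : ∀ u, φ (C u) = C (φ₀ u)) (P : Polynomial B) :
    φ P = (P.map (φ₀ : B →+* B)).comp (φ X) := by
  induction P using Polynomial.induction_on' with
  | add f g hf hg => rw [map_add, hf, hg, Polynomial.map_add, add_comp]
  | monomial n a =>
    rw [map_monomial, monomial_comp, ← C_mul_X_pow_eq_monomial, map_mul, map_pow, h]
    rfl

include hp hp1 in
theorem triangular (hq : q ≠ 0) (hq1 : q ≠ 1) (φ : Polynomial B ≃ₐ[K] Polynomial B) :
    ∃ (φ₀ : B ≃ₐ[K] B) (a : Kˣ) (b : B), b ∈ Subalgebra.center K B ∧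
      (∀ u : B, φ (C u) = C (φ₀ u)) ∧ φ X = (a : K) • X + C b := by
  have := noZeroDivisors hp hp1 hq
  have := nontrivialB (q := q) hp hp1
  obtain ⟨φ₀, h⟩ := exists_restrict hp hp1 hq hq1 φ
  set Q := (φ.symm X).map (φ₀ : B →+* B) with hQ
  have hcomp : Q.comp (φ X) = X := by
    rw [hQ, ← map_eq_comp φ h, AlgEquiv.apply_symm_apply]
  have hdeg := congrArg natDegree hcomp
  rw [natDegree_comp, natDegree_X] at hdeg
  obtain ⟨hd1, hd2⟩ := mul_eq_one.1 hdeg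
  have eX := eq_X_add_C_of_natDegree_le_one hd2.le
  have eQ := eq_X_add_C_of_natDegree_le_one hd1.le
  set α := (φ X).coeff 1
  set β := (φ X).coeff 0
  set γ := Q.coeff 1
  -- The linear coefficient of `Q ∘ φ(w) = w`.
  have hγα : γ * α = 1 := by
    have := congrArg (fun f => coeff f 1) hcomp
    rw [eQ, eX] at this
    simpa using this
  have hα : ∃ c : K, c ≠ 0 ∧ α = algebraMap K B c := by
    have h1 : ev hp hp1 (γ * α) = single 0 1 := by rw [hγα, ev_one]
    rcases atom_factor hp hp1 hq one_ne_zero h1 rfl (by simp) with ⟨c, hc, hγ⟩ | h2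
    · refine ⟨c⁻¹, inv_ne_zero hc, ?_⟩
      have h3 : algebraMap K B c⁻¹ * γ = 1 := by
        rw [hγ, ← map_mul, inv_mul_cancel₀ hc, map_one]
      rw [← one_mul α, ← h3, mul_assoc, hγα, mul_one]
    · exact h2
  obtain ⟨c, hc, hαc⟩ := hα
  refine ⟨φ₀, Units.mk0 c hc, β, ?_, h, ?_⟩
  · rw [Subalgebra.mem_center_iff]
    intro b
    have h1 : φ (C (φ₀.symm b)) * φ X = φ X * φ (C (φ₀.symm b)) := by
      rw [← map_mul, ← map_mul, X_mul]
    rw [h, AlgEquiv.apply_symm_apply] at h1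
    have h2 := congrArg (fun f => coeff f 0) h1
    simpa only [coeff_C_mul, coeff_mul_C] using h2
  · rw [Units.val_mk0, eX, hαc, Algebra.smul_def]
    rfl

/-! ### Exponentials of locally nilpotent derivations -/

section Exp

variable {A : Type*} [Semiring A] [Algebra K A]

lemma leibniz_pow {δ : Module.End K A} (hδ : ∀ a b, δ (a * b) = δ a * b + a * δ b) (n : ℕ)
    (a b : A) : (δ ^ n) (a * b) =
      ∑ ij ∈ Finset.HasAntidiagonal.antidiagonal n, n.choose ij.1 • ((δ ^ ij.1) a * (δ ^ ij.2) b) := by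
  induction n with
  | zero => simp
  | succ n ih =>
    rw [Finset.sum_antidiagonal_choose_succ_nsmul (fun i j => (δ ^ i) a * (δ ^ j) b), pow_succ',
      Module.End.mul_apply, ih, map_sum, ← Finset.sum_add_distrib]
    refine Finset.sum_congr rfl fun ij hij => ?_
    rw [Nat.choose_symm_of_eq_add (Finset.HasAntidiagonal.mem_antidiagonal.1 hij).symm, map_nsmul, hδ, nsmul_add,
      add_comm, pow_succ', pow_succ', Module.End.mul_apply, Module.End.mul_apply]

/-- The polynomial `exp(c w δ)(b) = ∑ (cⁱ / i!) δⁱ(b) wⁱ`; `N` bounds the number of nonzero terms. -/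
def expPoly (δ : Module.End K A) (N : A → ℕ) (c : K) (b : A) : Polynomial A :=
  ∑ i ∈ Finset.range (N b), monomial i ((c ^ i * ((i.factorial : ℕ) : K)⁻¹) • (δ ^ i) b)

lemma coeff_expPoly {δ : Module.End K A} {N : A → ℕ} (hN : ∀ b, ∀ i ≥ N b, (δ ^ i) b = 0) (c : K)
    (b : A) (i : ℕ) :
    (expPoly δ N c b).coeff i = (c ^ i * ((i.factorial : ℕ) : K)⁻¹) • (δ ^ i) b := by
  rw [expPoly, finsetSum_coeff]
  simp only [coeff_monomial, Finset.sum_ite_eq', Finset.mem_range]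
  split_ifs with h
  · rfl
  · rw [hN b i (not_lt.1 h), smul_zero]

/-- `exp(c w δ)` as an algebra homomorphism `A → A[w]`. -/
def expHom [CharZero K] {δ : Module.End K A} (hδ : ∀ a b, δ (a * b) = δ a * b + a * δ b)
    (h1 : δ 1 = 0) {N : A → ℕ} (hN : ∀ b, ∀ i ≥ N b, (δ ^ i) b = 0) (c : K) :
    A →ₐ[K] Polynomial A :=
  AlgHom.ofLinearMap
    { toFun := expPoly δ N c
      map_add' := fun a b => by
        ext i
        rw [coeff_add, coeff_expPoly hN, coeff_expPoly hN, coeff_expPoly hN, map_add, smul_add]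
      map_smul' := fun r a => by
        ext i
        rw [RingHom.id_apply, coeff_smul, coeff_expPoly hN, coeff_expPoly hN, map_smul, smul_comm] }
    (by
      ext i
      change (expPoly δ N c 1).coeff i = _
      rw [coeff_expPoly hN, coeff_one]
      cases i with
      | zero => simp
      | succ i => simp [pow_succ, h1])
    (fun a b => by
      ext n
      change (expPoly δ N c (a * b)).coeff n = (expPoly δ N c a * expPoly δ N c b).coeff n
      rw [coeff_expPoly hN, coeff_mul, leibniz_pow hδ, Finset.smul_sum]
      refine Finset.sum_congr rfl fun ij hij => ?_
      obtain ⟨i, j⟩ := ij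
      obtain rfl : i + j = n := Finset.HasAntidiagonal.mem_antidiagonal.1 hij
      rw [coeff_expPoly hN, coeff_expPoly hN, smul_mul_smul_comm, ← Nat.cast_smul_eq_nsmul K,
        smul_smul]
      congr 1
      rw [Nat.cast_add_choose]
      have hi : ((i.factorial : ℕ) : K) ≠ 0 := Nat.cast_ne_zero.2 i.factorial_ne_zero
      have hj : ((j.factorial : ℕ) : K) ≠ 0 := Nat.cast_ne_zero.2 j.factorial_ne_zero
      have hij : (((i + j).factorial : ℕ) : K) ≠ 0 := Nat.cast_ne_zero.2 (i + j).factorial_ne_zero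
      field_simp
      ring)

/-- The extension of `exp(c w δ)` to a `w`-linear endomorphism of `A[w]`. -/
def expEnd [CharZero K] {δ : Module.End K A} (hδ : ∀ a b, δ (a * b) = δ a * b + a * δ b)
    (h1 : δ 1 = 0) {N : A → ℕ} (hN : ∀ b, ∀ i ≥ N b, (δ ^ i) b = 0) (c : K) :
    Polynomial A →ₐ[K] Polynomial A :=
  eval₂AlgHom (expHom hδ h1 hN c) X fun _ => (commute_X _).symm

section

variable [CharZero K] {δ : Module.End K A} (hδ : ∀ a b, δ (a * b) = δ a * b + a * δ b)
    (h1 : δ 1 = 0) {N : A → ℕ} (hN : ∀ b, ∀ i ≥ N b, (δ ^ i) b = 0)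

lemma expEnd_X (c : K) : expEnd hδ h1 hN c X = X := eval₂_X _ _

lemma expEnd_C (c : K) (b : A) : expEnd hδ h1 hN c (C b) = expPoly δ N c b := eval₂_C _ _

lemma coeff_expEnd_monomial (c : K) (b : A) (j n : ℕ) :
    (expEnd hδ h1 hN c (monomial j b)).coeff (n + j) =
      (c ^ n * ((n.factorial : ℕ) : K)⁻¹) • (δ ^ n) b := by
  rw [← C_mul_X_pow_eq_monomial, map_mul, map_pow, expEnd_X, expEnd_C, coeff_mul_X_pow,
    coeff_expPoly hN]

/-- `exp(c w δ) exp(d w δ) = exp((c + d) w δ)`. -/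
lemma expEnd_comp_C (c d : K) (b : A) :
    expEnd hδ h1 hN c (expPoly δ N d b) = expPoly δ N (c + d) b := by
  ext n
  have hM : expPoly δ N d b = ∑ j ∈ Finset.range (max (N b) (n + 1)),
      monomial j ((d ^ j * ((j.factorial : ℕ) : K)⁻¹) • (δ ^ j) b) := by
    rw [expPoly]
    refine Finset.sum_subset (Finset.range_mono (le_max_left _ _)) fun j _ hj => ?_
    rw [hN b j (by simpa using hj), smul_zero, monomial_zero_right]
  rw [hM, map_sum, finsetSum_coeff, coeff_expPoly hN]
  have hsub : Finset.range (n + 1) ⊆ Finset.range (max (N b) (n + 1)) :=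
    Finset.range_mono (le_max_right _ _)
  rw [← Finset.sum_subset hsub]
  · have hterm : ∀ j ∈ Finset.range (n + 1),
        (expEnd hδ h1 hN c (monomial j ((d ^ j * ((j.factorial : ℕ) : K)⁻¹) • (δ ^ j) b))).coeff n
          = ((d ^ j * c ^ (n - j) * (n.choose j : K)) * ((n.factorial : ℕ) : K)⁻¹) • (δ ^ n) b := by
      intro j hj
      have hjn : j ≤ n := Nat.lt_succ_iff.1 (Finset.mem_range.1 hj)
      obtain ⟨k, rfl⟩ := Nat.exists_eq_add_of_le' hjn
      rw [coeff_expEnd_monomial, map_smul, smul_smul, ← Module.End.mul_apply, ← pow_add,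
        Nat.add_sub_cancel]
      congr 1
      rw [add_comm k j, Nat.cast_add_choose]
      have hi : ((k.factorial : ℕ) : K) ≠ 0 := Nat.cast_ne_zero.2 k.factorial_ne_zero
      have hj : ((j.factorial : ℕ) : K) ≠ 0 := Nat.cast_ne_zero.2 j.factorial_ne_zero
      have hij : (((j + k).factorial : ℕ) : K) ≠ 0 := Nat.cast_ne_zero.2 (j + k).factorial_ne_zero
      field_simp
    rw [Finset.sum_congr rfl hterm, ← Finset.sum_smul, ← Finset.sum_mul, add_comm c d, add_pow]
  · intro j _ hj
    rw [← C_mul_X_pow_eq_monomial, map_mul, map_pow, expEnd_X]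
    rw [coeff_mul_X_pow', if_neg]
    simpa using hj

include hN in
omit [CharZero K] in
lemma expPoly_zero (b : A) : expPoly δ N (0 : K) b = C b := by
  ext n
  rw [coeff_expPoly hN, coeff_C]
  cases n with
  | zero => simp
  | succ n => simp

lemma expEnd_expEnd (c d : K) (h : c + d = 0) (P : Polynomial A) :
    expEnd hδ h1 hN c (expEnd hδ h1 hN d P) = P := by
  induction P using Polynomial.induction_on' with
  | add f g hf hg => rw [map_add, map_add, hf, hg]
  | monomial n a =>
    rw [← C_mul_X_pow_eq_monomial, map_mul, map_mul, map_pow, map_pow, expEnd_X, expEnd_X, expEnd_C,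
      expEnd_comp_C, h, expPoly_zero hN]

/-- The automorphism `exp(w δ)` of `A[w]`, with inverse `exp(-w δ)`. -/
def expAut : Polynomial A ≃ₐ[K] Polynomial A :=
  AlgEquiv.ofBijective (expEnd hδ h1 hN 1) <| Function.bijective_iff_has_inverse.2
    ⟨expEnd hδ h1 hN (-1), expEnd_expEnd hδ h1 hN _ _ (by simp),
      expEnd_expEnd hδ h1 hN _ _ (by simp)⟩

end

end Exp

include hp hp1 in
theorem lnd_eq_zero [CharZero K] (hq : q ≠ 0) (hq1 : q ≠ 1) (δ : Module.End K B)
    (hδ : ∀ a b : B, δ (a * b) = δ a * b + a * δ b) (hnil : ∀ a, ∃ n : ℕ, 1 ≤ n ∧ (δ ^ n) a = 0) :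
    δ = 0 := by
  have h1 : δ 1 = 0 := by
    have h := hδ 1 1
    rw [mul_one, mul_one, one_mul] at h
    exact left_eq_add.1 h
  choose N _ hN using hnil
  have hN' : ∀ b, ∀ i ≥ N b, (δ ^ i) b = 0 := by
    intro b i hi
    obtain ⟨k, rfl⟩ := Nat.exists_eq_add_of_le' hi
    rw [pow_add, Module.End.mul_apply, hN, map_zero]
  obtain ⟨φ₀, _, _, _, h, _⟩ := triangular hp hp1 hq hq1 (expAut hδ h1 hN')
  ext b
  have h2 : expPoly δ N (1 : K) b = C (φ₀ b) := (expEnd_C hδ h1 hN' 1 b).symm.trans (h b)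
  have h3 := congrArg (fun f => coeff f 1) h2
  simp only [coeff_expPoly hN', coeff_C_succ] at h3
  simpa using h3

end

end ExtWeylAux

open Polynomial in
/-- Assume `p ≠ 1` and `q ≠ 1`, and `B = A_p(1, 1, K_q[s,t])`. Every
`K`-algebra automorphism `φ` of `B[w]` is triangular: there exist an automorphism `φ₀` of
`B`, `a ∈ K^×` and `b` in the center of `B` with `φ(u) = φ₀(u)` for `u ∈ B` and
`φ(w) = a·w + b`. Moreover, if `char K = 0`, every locally nilpotent `K`-linear derivation
of `B` is zero. -/
theorem extWeyl11_polynomial_aut_triangular_and_lnd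
    (hp : p ≠ 0) (hq : q ≠ 0) (hp1 : p ≠ 1) (hq1 : q ≠ 1) :
    (∀ φ : Polynomial (ExtWeyl K p q 1 1) ≃ₐ[K] Polynomial (ExtWeyl K p q 1 1),
      ∃ (φ₀ : ExtWeyl K p q 1 1 ≃ₐ[K] ExtWeyl K p q 1 1) (a : Kˣ) (b : ExtWeyl K p q 1 1),
        b ∈ Subalgebra.center K (ExtWeyl K p q 1 1) ∧
        (∀ u : ExtWeyl K p q 1 1, φ (C u) = C (φ₀ u)) ∧
        φ (X : Polynomial (ExtWeyl K p q 1 1)) =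
          (a : K) • (X : Polynomial (ExtWeyl K p q 1 1)) + C b) ∧
    (∀ _ : CharZero K,
      ∀ δ : Module.End K (ExtWeyl K p q 1 1),
        (∀ a b : ExtWeyl K p q 1 1, δ (a * b) = δ a * b + a * δ b) →
        (∀ a : ExtWeyl K p q 1 1, ∃ n : ℕ, 1 ≤ n ∧ (δ ^ n) a = 0) →
        δ = 0) := by
  exact ⟨ExtWeylAux.triangular hp hp1 hq hq1,
    fun _ δ hδ hnil => ExtWeylAux.lnd_eq_zero hp hp1 hq hq1 δ hδ hnil⟩
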